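/- arXiv:2406.08339 — 2 statements merged into one kernel-verified Lean document; each statement's English description precedes it below -/
import Mathlib

section
/- There is a constant C > 0 such that for every ε ∈ (0,1/2) and every δ ∈ (0,1) there exists a spin field u ∈ S₀(ε) with E_{ε,δ}(u) ≤ C · min{δ², ε·δ^{3/2}·(|ln(ε/δ^{1/2})| + 1), ε·δ^{1/2}} (upper bound of the scaling law for the minimal energy, Theorem 2.2(i)/Proposition 5.1). -/
open Real Finset

noncomputable section

/-- `Kof ε` is the largest integer `K` with `K * ε < 1`. -/
def Kof (ε : ℝ) : ℤ := ⌈1 / ε⌉ - 1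

/-- Index set of the lattice `[0,1)² ∩ εℤ²`. -/
def Idx (ε : ℝ) : Finset (ℤ × ℤ) :=
  Finset.Icc 0 (Kof ε) ×ˢ Finset.Icc 0 (Kof ε)

/-- Indices `(i,j)` with `i + 2 ≤ K`. -/
def IdxH (ε : ℝ) : Finset (ℤ × ℤ) :=
  Finset.Icc 0 (Kof ε - 2) ×ˢ Finset.Icc 0 (Kof ε)

/-- Indices `(i,j)` with `j + 2 ≤ K`. -/
def IdxV (ε : ℝ) : Finset (ℤ × ℤ) :=
  Finset.Icc 0 (Kof ε) ×ˢ Finset.Icc 0 (Kof ε - 2)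

/-- Squared Euclidean norm on `ℝ × ℝ`. -/
def sqnorm (v : ℝ × ℝ) : ℝ := v.1 ^ 2 + v.2 ^ 2

/-- Euclidean scalar product on `ℝ × ℝ`. -/
def dotp (a b : ℝ × ℝ) : ℝ := a.1 * b.1 + a.2 * b.2

/-- Cross product `a × b = a₁b₂ − a₂b₁`. -/
def crossp (a b : ℝ × ℝ) : ℝ := a.1 * b.2 - a.2 * b.1

/-- sign with convention `sign 0 = -1`. -/
def sgn (x : ℝ) : ℝ := if 0 < x then 1 else -1

/-- A spin field: unit vectors on the lattice. -/
def IsSpin (ε : ℝ) (u : ℤ × ℤ → ℝ × ℝ) : Prop :=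
  ∀ p ∈ Idx ε, sqnorm (u p) = 1

/-- Spin fields with ferromagnetic Dirichlet boundary condition on the left boundary. -/
def InS0 (ε : ℝ) (u : ℤ × ℤ → ℝ × ℝ) : Prop :=
  IsSpin ε u ∧ ∀ j ∈ Finset.Icc (0 : ℤ) (Kof ε), u (0, j) = (0, 1)

/-- Horizontal part of the energy. -/
def Ehor (ε δ : ℝ) (u : ℤ × ℤ → ℝ × ℝ) : ℝ :=
  ε ^ 2 / 2 * ∑ p ∈ IdxH ε,
    sqnorm (u p - (2 * (1 - δ)) • u (p.1 + 1, p.2) + u (p.1 + 2, p.2))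

/-- Vertical part of the energy. -/
def Ever (ε δ : ℝ) (u : ℤ × ℤ → ℝ × ℝ) : ℝ :=
  ε ^ 2 / 2 * ∑ p ∈ IdxV ε,
    sqnorm (u p - (2 * (1 - δ)) • u (p.1, p.2 + 1) + u (p.1, p.2 + 2))

/-- The total energy `E_{ε,δ}`. -/
def E (ε δ : ℝ) (u : ℤ × ℤ → ℝ × ℝ) : ℝ := Ehor ε δ u + Ever ε δ u

/-- The scaling function `s(ε,δ)`. -/
def sfun (ε δ : ℝ) : ℝ :=
  min (δ ^ 2)
    (min (ε * (δ * Real.sqrt δ) * (|Real.log (ε / Real.sqrt δ)| + 1)) (ε * Real.sqrt δ))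

/-- Horizontal angular velocity of a spin field. -/
def thetaH (u : ℤ × ℤ → ℝ × ℝ) (p : ℤ × ℤ) : ℝ :=
  sgn (crossp (u p) (u (p.1 + 1, p.2))) * Real.arccos (dotp (u p) (u (p.1 + 1, p.2)))

/-- Vertical angular velocity of a spin field. -/
def thetaV (u : ℤ × ℤ → ℝ × ℝ) (p : ℤ × ℤ) : ℝ :=
  sgn (crossp (u p) (u (p.1, p.2 + 1))) * Real.arccos (dotp (u p) (u (p.1, p.2 + 1)))

/-- The function `p` of Lemma 3.1. -/
def pfun (θ₁ θ₂ : ℝ) : ℝ :=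
  if θ₁ = θ₂ then 1
  else (Real.sin θ₁ ^ 2 + Real.sin θ₂ ^ 2 - (1 - Real.cos (θ₁ + θ₂))) /
    (2 * (Real.sin (θ₂ / 2) - Real.sin (θ₁ / 2)) ^ 2)

end

/-!
The constant field `(0, 1)` costs `δ ^ 2`. The two other competitors use the helix angle `θ` with
`cos θ = 1 - δ`, so that `θ` is comparable to `√δ`: the energy density vanishes wherever the angle
increments in each coordinate direction are constantly `θ` or constantly `-θ`.

*Branching.* The phase is `θ` times the distance to zigzag graphs whose period doubles with the
distance from the left boundary, where it vanishes; it is averaged over one helix period. Only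
lattice points near a kink contribute, each at most a multiple of `θ ^ 4`. Each of the roughly
`log (θ / ε)` generations has at most a multiple of `(θ / ε) / θ ^ 2` such points, which gives a
total of order `ε * θ ^ 3 * log (θ / ε)`.

*Vortices.* The field is the direction of the linear interpolation, over one helix period, between
the constant spin and a diagonal helix. The interpolation has zeros along a column, one per helix
period. The energy density decays quadratically in the lattice distance from the zeros, with a
rate that makes each zero cost a bounded amount; as there are of order `θ / ε` of them, the total
is of order `ε ^ 2 * (θ / ε) = ε * θ`.
-/

section GeneralFacts

lemma card_le_of_forall_mem_Icc {S : Finset ℤ} {a b : ℝ} (hab : a ≤ b)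
    (h : ∀ i ∈ S, (i : ℝ) ∈ Set.Icc a b) : (#S : ℝ) ≤ b - a + 1 := by
  have hsub : S ⊆ Icc ⌈a⌉ ⌊b⌋ := fun i hi ↦
    Finset.mem_Icc.2 ⟨Int.ceil_le.2 (h i hi).1, Int.le_floor.2 (h i hi).2⟩
  have hcard : (#S : ℤ) ≤ max (⌊b⌋ + 1 - ⌈a⌉) 0 := by
    rw [← Int.toNat_eq_max, ← Int.card_Icc]
    exact_mod_cast card_le_card hsub
  have hcard' : (#S : ℝ) ≤ max ((⌊b⌋ : ℝ) + 1 - ⌈a⌉) 0 := by exact_mod_cast hcard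
  refine hcard'.trans (max_le ?_ (by linarith))
  linarith [Int.floor_le b, Int.le_ceil a]

lemma summable_inv_one_add_int_sq : Summable fun k : ℤ ↦ (1 + (k : ℝ) ^ 2)⁻¹ := by
  refine .of_norm_bounded_eventually (g := fun k : ℤ ↦ 1 / (k : ℝ) ^ 2)
    (Real.summable_one_div_int_pow.2 one_lt_two) ?_
  filter_upwards [(Set.finite_singleton (0 : ℤ)).compl_mem_cofinite] with k hk
  have hk' : (0 : ℝ) < (k : ℝ) ^ 2 := by
    have : (k : ℝ) ≠ 0 := by exact_mod_cast hk
    positivity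
  rw [Real.norm_of_nonneg (by positivity), ← one_div]
  gcongr
  linarith

lemma exists_sum_inv_one_add_sq_le :
    ∃ C > 0, ∀ (S : Finset ℤ) (c : ℝ), ∑ j ∈ S, (1 + ((j : ℝ) - c) ^ 2)⁻¹ ≤ C := by
  set f : ℤ → ℝ := fun k ↦ (1 + (k : ℝ) ^ 2)⁻¹ with hf
  have hf0 : ∀ k, 0 ≤ f k := fun k ↦ by positivity
  refine ⟨2 * ∑' k, f k, ?_, fun S c ↦ ?_⟩
  · have := summable_inv_one_add_int_sq.tsum_pos hf0 0 (by simp)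
    positivity
  have hshift : ∀ j : ℤ, (1 + ((j : ℝ) - c) ^ 2)⁻¹ ≤ 2 * f (j - round c) := fun j ↦ by
    have hc : (c - round c) ^ 2 ≤ (1 / 2) ^ 2 := sq_le_sq' (abs_le.1 (abs_sub_round c)).1
      (abs_le.1 (abs_sub_round c)).2
    simp only [hf, Int.cast_sub]
    rw [← div_eq_mul_inv, ← one_div, div_le_div_iff₀ (by positivity) (by positivity)]
    nlinarith [sq_nonneg ((j : ℝ) - c - (c - round c))]
  calc ∑ j ∈ S, (1 + ((j : ℝ) - c) ^ 2)⁻¹ ≤ ∑ j ∈ S, 2 * f (j - round c) :=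
        sum_le_sum fun j _ ↦ hshift j
    _ = 2 * ∑ j ∈ S, f (Equiv.subRight (round c) j) := by rw [mul_sum]; rfl
    _ ≤ 2 * ∑' j, f (Equiv.subRight (round c) j) := by
        gcongr
        exact ((Equiv.subRight (round c)).summable_iff.2 summable_inv_one_add_int_sq).sum_le_tsum
          S fun j _ ↦ hf0 _
    _ = 2 * ∑' k, f k := by rw [(Equiv.subRight (round c)).tsum_eq f]

lemma exists_le_max_mul_min {α : Type*} {P : α → Prop} {F : α → ℝ} {A B a b : ℝ}
    (ha : 0 ≤ a) (hb : 0 ≤ b) (hA : ∃ u, P u ∧ F u ≤ A * a) (hB : ∃ u, P u ∧ F u ≤ B * b) :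
    ∃ u, P u ∧ F u ≤ max A B * min a b := by
  rcases le_total a b with hab | hab
  · obtain ⟨u, hu, hF⟩ := hA
    exact ⟨u, hu, hF.trans (by rw [min_eq_left hab]; gcongr; exact le_max_left A B)⟩
  · obtain ⟨u, hu, hF⟩ := hB
    exact ⟨u, hu, hF.trans (by rw [min_eq_right hab]; gcongr; exact le_max_right A B)⟩

end GeneralFacts

section PeriodicDistance

variable {p : ℝ}

lemma norm_coe_addCircle_le_abs_sub (p t : ℝ) (k : ℤ) :
    ‖(t : AddCircle p)‖ ≤ |t - k * p| := by
  have hcoe : ((t - k * p : ℝ) : AddCircle p) = t := by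
    rw [AddCircle.coe_sub, ← zsmul_eq_mul, AddCircle.coe_zsmul, AddCircle.coe_period]
    simp
  rw [← hcoe, ← Real.norm_eq_abs]
  exact QuotientAddGroup.norm_mk_le_norm

lemma abs_norm_coe_addCircle_sub_le (p s t : ℝ) :
    |‖(s : AddCircle p)‖ - ‖(t : AddCircle p)‖| ≤ |s - t| := by
  refine (abs_norm_sub_norm_le _ _).trans ?_
  simpa using norm_coe_addCircle_le_abs_sub p (s - t) 0

lemma sum_comp_norm_coe_addCircle_le {ι : Type*} {S : Finset ι} {x : ι → ℝ} {F : ℝ → ℝ}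
    {a b B : ℝ} (hp : 0 < p) (hab : a ≤ b) (hx : ∀ j ∈ S, x j ∈ Set.Icc a b)
    (hF0 : ∀ t, 0 ≤ F t) (hFeven : ∀ t, F |t| = F t) (hB : ∀ v, ∑ j ∈ S, F (x j - v) ≤ B) :
    ∑ j ∈ S, F ‖(x j : AddCircle p)‖ ≤ ((b - a) / p + 2) * B := by
  have hB0 : 0 ≤ B := (sum_nonneg fun _ _ ↦ hF0 _).trans (hB 0)
  set Q : Finset ℤ := S.image fun j ↦ round (p⁻¹ * x j) with hQ
  have hQcard : (#Q : ℝ) ≤ (b - a) / p + 2 := by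
    have hmem : ∀ q ∈ Q, (q : ℝ) ∈ Set.Icc (a / p - 1 / 2) (b / p + 1 / 2) := by
      simp only [hQ, mem_image, forall_exists_index, and_imp]
      rintro _ j hj rfl
      have hround := abs_le.1 (abs_sub_round (p⁻¹ * x j))
      have hlo : a / p ≤ p⁻¹ * x j := by
        rw [inv_mul_eq_div]; gcongr; exact (hx j hj).1
      have hhi : p⁻¹ * x j ≤ b / p := by
        rw [inv_mul_eq_div]; gcongr; exact (hx j hj).2
      constructor <;> linarith
    have hdiv : a / p ≤ b / p := by gcongr
    have := card_le_of_forall_mem_Icc (by linarith) hmem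
    rw [sub_div]
    linarith
  calc ∑ j ∈ S, F ‖(x j : AddCircle p)‖
      = ∑ j ∈ S, F (x j - round (p⁻¹ * x j) * p) := by simp only [AddCircle.norm_eq, hFeven]
    _ ≤ ∑ j ∈ S, ∑ q ∈ Q, F (x j - q * p) := sum_le_sum fun j hj ↦
        single_le_sum (f := fun q : ℤ ↦ F (x j - q * p)) (fun _ _ ↦ hF0 _)
          (mem_image_of_mem _ hj)
    _ = ∑ q ∈ Q, ∑ j ∈ S, F (x j - q * p) := sum_comm
    _ ≤ ∑ _q ∈ Q, B := sum_le_sum fun q _ ↦ hB _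
    _ = #Q * B := by rw [sum_const, nsmul_eq_mul]
    _ ≤ ((b - a) / p + 2) * B := by gcongr

end PeriodicDistance

section Fields

/-- The spin field with values `w i j`. The plane is identified with `ℂ` by `(x, y) ↦ y + i x`, so
that the boundary value `(0, 1)` becomes `1`. -/
noncomputable def spinField (w : ℤ → ℤ → Circle) : ℤ × ℤ → ℝ × ℝ :=
  fun p ↦ ((w p.1 p.2 : ℂ).im, (w p.1 p.2 : ℂ).re)

/-- The energy density of three consecutive spins `a`, `b`, `c`; the helix angle has cosine `κ`. -/
noncomputable def helicalDefect (κ : ℝ) (a b c : ℂ) : ℝ :=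
  ‖a - 2 * κ * b + c‖ ^ 2

lemma sqnorm_spinField (κ : ℝ) (w : ℤ → ℤ → Circle) (p q r : ℤ × ℤ) :
    sqnorm (spinField w p - (2 * κ) • spinField w q + spinField w r) =
      helicalDefect κ (w p.1 p.2) (w q.1 q.2) (w r.1 r.2) := by
  rw [helicalDefect, Complex.sq_norm, Complex.normSq_apply]
  simp only [sqnorm, spinField, Prod.fst_add, Prod.fst_sub, Prod.snd_add, Prod.snd_sub,
    Prod.smul_fst, Prod.smul_snd, smul_eq_mul, Complex.add_re, Complex.sub_re, Complex.add_im,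
    Complex.sub_im, Complex.mul_re, Complex.mul_im, Complex.re_ofNat, Complex.im_ofNat,
    Complex.ofReal_re, Complex.ofReal_im]
  ring

lemma inS0_spinField {ε : ℝ} {w : ℤ → ℤ → Circle} (hw : ∀ j, w 0 j = 1) :
    InS0 ε (spinField w) := by
  refine ⟨fun p _ ↦ ?_, fun j _ ↦ by simp [spinField, hw]⟩
  have := Circle.normSq_coe (w p.1 p.2)
  rw [Complex.normSq_apply] at this
  simp only [sqnorm, spinField]
  linarith

lemma two_le_Kof {ε : ℝ} (hε : ε ∈ Set.Ioo 0 (1 / 2)) : 2 ≤ Kof ε := by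
  have : (2 : ℝ) < 1 / ε := by rw [lt_div_iff₀ hε.1]; linarith [hε.2]
  have : (2 : ℤ) < ⌈1 / ε⌉ := Int.lt_ceil.2 (by exact_mod_cast this)
  unfold Kof
  omega

lemma Kof_mul_lt_one {ε : ℝ} (hε : 0 < ε) : Kof ε * ε < 1 := by
  rw [← lt_div_iff₀ hε, Kof]
  push_cast
  linarith [Int.ceil_lt_add_one (1 / ε)]

lemma card_Icc_Kof_mul_le {ε : ℝ} (hε : ε ∈ Set.Ioo 0 (1 / 2)) :
    #(Icc 0 (Kof ε)) * ε ≤ 3 / 2 := by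
  have hcard : (#(Icc 0 (Kof ε)) : ℤ) = Kof ε + 1 := by
    have := two_le_Kof hε
    rw [Int.card_Icc, Int.toNat_of_nonneg] <;> omega
  have hcard' : (#(Icc 0 (Kof ε)) : ℝ) = Kof ε + 1 := by exact_mod_cast hcard
  rw [hcard', add_one_mul]
  linarith [Kof_mul_lt_one hε.1, hε.2]

lemma sum_Icc_comp_add_one_le {h : ℤ → ℝ} (K : ℤ) (hh : ∀ i ∈ Icc 0 K, 0 ≤ h i) :
    ∑ i ∈ Icc 0 (K - 2), h (i + 1) ≤ ∑ i ∈ Icc 0 K, h i := by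
  calc ∑ i ∈ Icc 0 (K - 2), h (i + 1) = ∑ i ∈ Icc (0 + 1) (K - 2 + 1), h i := by
        rw [← map_add_right_Icc, sum_map]; rfl
    _ ≤ ∑ i ∈ Icc 0 K, h i :=
        sum_le_sum_of_subset_of_nonneg (Icc_subset_Icc (by omega) (by omega))
          fun i hi _ ↦ hh i hi

lemma E_spinField_le {ε κ : ℝ} {w : ℤ → ℤ → Circle} {g : ℤ → ℤ → ℝ} (hg : ∀ i j, 0 ≤ g i j)
    (hH : ∀ i ∈ Icc 1 (Kof ε - 1), ∀ j ∈ Icc 0 (Kof ε),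
      helicalDefect κ (w (i - 1) j) (w i j) (w (i + 1) j) ≤ g i j)
    (hV : ∀ i ∈ Icc 0 (Kof ε), ∀ j ∈ Icc 1 (Kof ε - 1),
      helicalDefect κ (w i (j - 1)) (w i j) (w i (j + 1)) ≤ g i j) :
    E ε (1 - κ) (spinField w) ≤ ε ^ 2 * ∑ i ∈ Icc 0 (Kof ε), ∑ j ∈ Icc 0 (Kof ε), g i j := by
  set K := Kof ε with hK
  have hhor : Ehor ε (1 - κ) (spinField w) ≤
      ε ^ 2 / 2 * ∑ i ∈ Icc 0 K, ∑ j ∈ Icc 0 K, g i j := by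
    simp only [Ehor, sub_sub_cancel, sqnorm_spinField, IdxH, sum_product, ← hK]
    gcongr
    calc _ ≤ ∑ i ∈ Icc 0 (K - 2), ∑ j ∈ Icc 0 K, g (i + 1) j := by
          refine sum_le_sum fun i hi ↦ sum_le_sum fun j hj ↦ ?_
          have hi' := mem_Icc.1 hi
          simpa [add_assoc] using hH (i + 1) (mem_Icc.2 (by omega)) j hj
      _ ≤ _ := sum_Icc_comp_add_one_le K fun i _ ↦ sum_nonneg fun j _ ↦ hg i j
  have hver : Ever ε (1 - κ) (spinField w) ≤
      ε ^ 2 / 2 * ∑ i ∈ Icc 0 K, ∑ j ∈ Icc 0 K, g i j := by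
    simp only [Ever, sub_sub_cancel, sqnorm_spinField, IdxV, sum_product, ← hK]
    gcongr with i hi
    calc _ ≤ ∑ j ∈ Icc 0 (K - 2), g i (j + 1) := by
          refine sum_le_sum fun j hj ↦ ?_
          have hj' := mem_Icc.1 hj
          simpa [add_assoc] using hV i hi (j + 1) (mem_Icc.2 (by omega))
      _ ≤ _ := sum_Icc_comp_add_one_le K fun j _ ↦ hg i j
  unfold E
  linarith

end Fields

section CircleExp

lemma coe_circleExp_sub_add_circleExp_add (s t : ℝ) :
    (Circle.exp (t - s) : ℂ) + Circle.exp (t + s) = 2 * Real.cos s * Circle.exp t := by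
  simp only [Circle.coe_exp, Complex.ofReal_sub, Complex.ofReal_add, sub_mul, add_mul,
    Complex.exp_sub, Complex.exp_add, Complex.ofReal_cos, Complex.two_cos, neg_mul,
    Complex.exp_neg]
  ring

lemma helicalDefect_cos_circleExp (s t : ℝ) :
    helicalDefect (Real.cos s) (Circle.exp (t - s)) (Circle.exp t) (Circle.exp (t + s)) = 0 := by
  rw [helicalDefect, sub_add_eq_add_sub, coe_circleExp_sub_add_circleExp_add]
  simp

lemma norm_circleExp_sub_le (s t : ℝ) :
    ‖(Circle.exp s : ℂ) - Circle.exp t‖ ≤ |s - t| := by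
  have hfactor : (Circle.exp s : ℂ) - Circle.exp t =
      Circle.exp t * (Complex.exp (Complex.I * (s - t : ℝ)) - 1) := by
    rw [mul_sub, mul_one, Circle.coe_exp, Circle.coe_exp, ← Complex.exp_add]
    push_cast
    ring_nf
  rw [hfactor, norm_mul, Circle.norm_coe, one_mul]
  exact Real.norm_exp_I_mul_ofReal_sub_one_le

lemma norm_circleExp_second_diff_le (s t : ℝ) :
    ‖(Circle.exp (t - s) : ℂ) - 2 * Circle.exp t + Circle.exp (t + s)‖ ≤ s ^ 2 := by
  have hfactor : (Circle.exp (t - s) : ℂ) - 2 * Circle.exp t + Circle.exp (t + s) =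
      (2 * (Real.cos s - 1) : ℝ) * Circle.exp t := by
    rw [sub_add_eq_add_sub, coe_circleExp_sub_add_circleExp_add]
    push_cast
    ring
  rw [hfactor, norm_mul, Circle.norm_coe, mul_one, Complex.norm_real, Real.norm_eq_abs, abs_le]
  constructor <;> linarith [Real.one_sub_sq_div_two_le_cos (x := s), Real.cos_le_one s,
    sq_nonneg s]

lemma norm_circleExp_second_diff_le_add (p q r : ℝ) :
    ‖(Circle.exp p : ℂ) - 2 * Circle.exp q + Circle.exp r‖ ≤ (q - p) ^ 2 + |p - 2 * q + r| := by
  have hp : (Circle.exp p : ℂ) = Circle.exp (q - (q - p)) := by rw [sub_sub_cancel]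
  have hr := norm_circleExp_sub_le r (q + (q - p))
  calc _ = ‖((Circle.exp (q - (q - p)) : ℂ) - 2 * Circle.exp q + Circle.exp (q + (q - p))) +
        (Circle.exp r - Circle.exp (q + (q - p)))‖ := by rw [hp]; ring_nf
    _ ≤ (q - p) ^ 2 + |r - (q + (q - p))| :=
        (norm_add_le _ _).trans (add_le_add (norm_circleExp_second_diff_le _ _) hr)
    _ = (q - p) ^ 2 + |p - 2 * q + r| := by ring_nf

lemma helicalDefect_cos_le (θ : ℝ) (a c : ℂ) (b : Circle) :
    helicalDefect (Real.cos θ) a b c ≤ 2 * ‖a - 2 * b + c‖ ^ 2 + 2 * θ ^ 4 := by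
  have hsplit : a - 2 * Real.cos θ * b + c = (a - 2 * b + c) + (2 * (1 - Real.cos θ) : ℝ) * b := by
    push_cast
    ring
  have hb : ‖((2 * (1 - Real.cos θ) : ℝ) : ℂ) * b‖ ≤ θ ^ 2 := by
    rw [norm_mul, Circle.norm_coe, mul_one, Complex.norm_real, Real.norm_of_nonneg]
    · linarith [Real.one_sub_sq_div_two_le_cos (x := θ)]
    · linarith [Real.cos_le_one θ]
  calc helicalDefect (Real.cos θ) a b c ≤ (‖a - 2 * b + c‖ + θ ^ 2) ^ 2 := by
        rw [helicalDefect, hsplit]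
        gcongr
        exact (norm_add_le _ _).trans (by gcongr)
    _ ≤ 2 * ‖a - 2 * b + c‖ ^ 2 + 2 * θ ^ 4 := by
        linarith [sq_nonneg (‖a - 2 * b + c‖ - θ ^ 2)]

end CircleExp

section Ferromagnet

lemma exists_ferromagnetic {ε δ : ℝ} (hε : ε ∈ Set.Ioo 0 (1 / 2)) :
    ∃ u, InS0 ε u ∧ E ε δ u ≤ 9 * δ ^ 2 := by
  refine ⟨spinField 1, inS0_spinField fun _ ↦ rfl, ?_⟩
  have hdefect : helicalDefect (1 - δ) 1 1 1 = 4 * δ ^ 2 := by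
    have : (1 : ℂ) - 2 * (1 - δ : ℝ) * 1 + 1 = (2 * δ : ℝ) := by push_cast; ring
    rw [helicalDefect, this, Complex.norm_real, Real.norm_eq_abs, sq_abs]
    ring
  have hE := E_spinField_le (ε := ε) (κ := 1 - δ) (w := 1) (g := fun _ _ ↦ 4 * δ ^ 2)
    (fun _ _ ↦ by positivity) (fun _ _ _ _ ↦ hdefect.le) (fun _ _ _ _ ↦ hdefect.le)
  have hε0 := hε.1
  rw [sub_sub_cancel] at hE
  calc E ε δ (spinField 1) ≤ (#(Icc 0 (Kof ε)) * ε) ^ 2 * (4 * δ ^ 2) := by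
        simp only [sum_const, nsmul_eq_mul] at hE
        linarith
    _ ≤ (3 / 2) ^ 2 * (4 * δ ^ 2) := by gcongr; exact card_Icc_Kof_mul_le hε
    _ = 9 * δ ^ 2 := by ring

end Ferromagnet

section HelixAngle

variable {δ : ℝ}

/-- The turning angle `arccos (1 - δ)` between neighbouring spins of a ground state. -/
noncomputable def helixAngle (δ : ℝ) : ℝ := Real.arccos (1 - δ)

lemma cos_helixAngle (hδ : δ ∈ Set.Icc 0 2) : Real.cos (helixAngle δ) = 1 - δ :=
  Real.cos_arccos (by linarith [hδ.2]) (by linarith [hδ.1])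

lemma helixAngle_le_pi_div_two (hδ : δ ≤ 1) : helixAngle δ ≤ π / 2 :=
  Real.arccos_le_pi_div_two.2 (by linarith)

lemma sqrt_le_helixAngle (hδ : δ ∈ Set.Icc 0 2) : √δ ≤ helixAngle δ := by
  have hcos := Real.one_sub_sq_div_two_le_cos (x := helixAngle δ)
  rw [cos_helixAngle hδ] at hcos
  exact Real.sqrt_le_iff.2 ⟨Real.arccos_nonneg _, by linarith [sq_nonneg (helixAngle δ)]⟩

lemma helixAngle_le_three_mul_sqrt (hδ : δ ∈ Set.Icc 0 2) : helixAngle δ ≤ 3 * √δ := by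
  have hcos : Real.cos (helixAngle δ) ≤ 1 - 2 / π ^ 2 * helixAngle δ ^ 2 :=
    Real.cos_le_one_sub_mul_cos_sq
      ((abs_of_nonneg (Real.arccos_nonneg _)).trans_le (Real.arccos_le_pi _))
  rw [cos_helixAngle hδ] at hcos
  have hpi : 1 / 9 ≤ 2 / π ^ 2 := by
    rw [div_le_div_iff₀ (by norm_num) (by positivity)]
    nlinarith [Real.pi_lt_d2, Real.pi_pos]
  refine abs_le_of_sq_le_sq' ?_ (by positivity) |>.2
  rw [mul_pow, Real.sq_sqrt hδ.1]
  nlinarith [mul_le_mul_of_nonneg_right hpi (sq_nonneg (helixAngle δ))]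

end HelixAngle

section NestedPeriods

lemma abs_sub_norm_coe_addCircle_le_of_multiple {p x : ℝ} (hp : 0 < p) (hx : x ≤ p / 2) (N : ℕ)
    (y : ℝ) : |x - ‖(y : AddCircle p)‖| ≤ |x - ‖(y : AddCircle (N * p))‖| := by
  set d := ‖(y : AddCircle p)‖ with hd
  set D := ‖(y : AddCircle (N * p))‖ with hD
  obtain ⟨k, hk⟩ : ∃ k : ℤ, D = |y - k * p| :=
    ⟨round ((N * p)⁻¹ * y) * N, by rw [hD, AddCircle.norm_eq]; push_cast; ring_nf⟩
  have hdD : d ≤ D := hk ▸ norm_coe_addCircle_le_abs_sub p y k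
  suffices h : D = d ∨ p - d ≤ D by
    rcases h with h | h
    · rw [h]
    · rw [abs_sub_comm x D]
      exact (abs_le.2 ⟨by linarith, by linarith⟩).trans (le_abs_self (D - x))
  set r : ℤ := round (p⁻¹ * y)
  have hdr : d = |y - r * p| := by rw [hd, AddCircle.norm_eq]
  rcases eq_or_ne k r with rfl | hkr
  · exact .inl (hk.trans hdr.symm)
  · right
    have hstep : (1 : ℝ) ≤ |(k : ℝ) - r| := by
      exact_mod_cast Int.one_le_abs (sub_ne_zero.2 hkr)
    have htri : |(k - r : ℝ)| * p ≤ d + D := by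
      calc |(k - r : ℝ)| * p = |(y - r * p) - (y - k * p)| := by
            rw [← abs_of_pos hp, ← abs_mul, abs_of_pos hp]; ring_nf
        _ ≤ d + D := by rw [hdr, hk]; exact abs_sub _ _
    nlinarith

lemma abs_sub_norm_coe_addCircle_le_of_divisor {q x : ℝ} (hq : 0 < q) {N : ℕ} (hN : 1 ≤ N)
    (hx : N * q / 2 ≤ x) (y : ℝ) :
    |x - ‖(y : AddCircle (2 * N * q))‖| ≤ |x - ‖(y : AddCircle q)‖| := by
  set d := ‖(y : AddCircle q)‖
  set D := ‖(y : AddCircle (2 * N * q))‖ with hD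
  have hDp : D ≤ N * q := by
    have hp : 0 < 2 * N * q := by positivity
    have := AddCircle.norm_le_half_period _ hp.ne' (x := (y : AddCircle (2 * N * q)))
    rw [abs_of_pos hp] at this
    linarith
  set k : ℤ := round ((2 * N * q)⁻¹ * y)
  have hDk : D = |y - k * (2 * N * q)| := by rw [hD, AddCircle.norm_eq]
  have hshift (l : ℤ) : d ≤ |y - k * (2 * N * q) - l * (N * q)| := by
    refine (norm_coe_addCircle_le_abs_sub q y (2 * k * N + l * N)).trans_eq (congrArg _ ?_)
    push_cast
    ring
  have hdD : d ≤ D := by simpa [← hDk] using hshift 0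
  have hsum : d + D ≤ N * q := by
    rcases abs_choice (y - k * (2 * N * q)) with h | h
    · have := hshift 1
      rw [← h, ← hDk, Int.cast_one, one_mul, abs_of_nonpos (by linarith)] at this
      linarith
    · have := hshift (-1)
      rw [← neg_eq_iff_eq_neg.2 h, ← hDk, abs_of_nonneg (by push_cast; linarith)] at this
      push_cast at this
      linarith
  exact (abs_le.2 ⟨by linarith, by linarith⟩).trans (le_abs_self (x - d))

end NestedPeriods

section BranchingPhase

/-- The branching phase with `n` generations, in units where the helix rotates by angle `1` per
unit length. Generation `k` is the distance to the graph of the `2 ^ (k + 2)`-periodic zigzag, and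
attains the minimum in the slab `2 ^ k ≤ x ≤ 2 ^ (k + 1)`. -/
noncomputable def branchingPhase : ℕ → ℝ → ℝ → ℝ
  | 0, x, _ => max x 0
  | n + 1, x, y => min (branchingPhase n x y) |x - ‖(y : AddCircle ((2 : ℝ) ^ (n + 2)))‖|

lemma abs_branchingPhase_sub_le (n : ℕ) (x' x y' y : ℝ) :
    |branchingPhase n x' y' - branchingPhase n x y| ≤ |x' - x| + |y' - y| := by
  induction n with
  | zero =>
    exact (abs_max_sub_max_le_abs x' x 0).trans (le_add_of_nonneg_right (abs_nonneg _))
  | succ n ih =>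
    refine (abs_min_sub_min_le_max _ _ _ _).trans (max_le ih ?_)
    set d' := ‖(y' : AddCircle ((2 : ℝ) ^ (n + 2)))‖
    set d := ‖(y : AddCircle ((2 : ℝ) ^ (n + 2)))‖
    calc |(|x' - d'| - |x - d|)| ≤ |(x' - d') - (x - d)| := abs_abs_sub_abs_le_abs_sub _ _
      _ = |(x' - x) - (d' - d)| := by ring_nf
      _ ≤ |x' - x| + |d' - d| := abs_sub _ _
      _ ≤ |x' - x| + |y' - y| := add_le_add le_rfl (abs_norm_coe_addCircle_sub_le _ _ _)

lemma branchingPhase_of_nonpos (n : ℕ) {x : ℝ} (hx : x ≤ 0) (y : ℝ) :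
    branchingPhase n x y = 0 := by
  induction n with
  | zero => exact max_eq_right hx
  | succ n ih => rw [branchingPhase, ih, min_eq_left (abs_nonneg _)]

lemma abs_sub_norm_le_of_mem_slab {m : ℕ} {x : ℝ} (hx : x ∈ Set.Icc ((2 : ℝ) ^ m) (2 ^ (m + 1)))
    (k : ℕ) (y : ℝ) :
    |x - ‖(y : AddCircle ((2 : ℝ) ^ (m + 2)))‖| ≤
      |x - ‖(y : AddCircle ((2 : ℝ) ^ (k + 2)))‖| := by
  rcases le_or_gt m k with hmk | hkm
  · obtain ⟨j, rfl⟩ := Nat.exists_eq_add_of_le hmk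
    have hperiod : (2 : ℝ) ^ (m + j + 2) = (2 ^ j : ℕ) * 2 ^ (m + 2) := by push_cast; ring
    rw [hperiod]
    refine abs_sub_norm_coe_addCircle_le_of_multiple (by positivity) (hx.2.trans_eq ?_) _ _
    ring
  · obtain ⟨j, rfl⟩ := Nat.exists_eq_add_of_lt hkm
    have hperiod : (2 : ℝ) ^ (k + j + 1 + 2) = 2 * (2 ^ j : ℕ) * 2 ^ (k + 2) := by
      push_cast; ring
    rw [hperiod]
    refine abs_sub_norm_coe_addCircle_le_of_divisor (by positivity) Nat.one_le_two_pow
      (le_trans (le_of_eq ?_) hx.1) _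
    push_cast
    ring

lemma branchingPhase_of_mem_slab {n m : ℕ} (hmn : m < n) {x : ℝ}
    (hx : x ∈ Set.Icc ((2 : ℝ) ^ m) (2 ^ (m + 1))) (y : ℝ) :
    branchingPhase n x y = |x - ‖(y : AddCircle ((2 : ℝ) ^ (m + 2)))‖| := by
  apply le_antisymm
  · induction n, hmn using Nat.le_induction with
    | base => exact min_le_right _ _
    | succ n _ ih => exact (min_le_left _ _).trans ih
  · clear hmn
    induction n with
    | zero =>
      have hp : (0 : ℝ) < 2 ^ (m + 2) := by positivity
      have hnorm := AddCircle.norm_le_half_period _ hp.ne'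
        (x := (y : AddCircle ((2 : ℝ) ^ (m + 2))))
      have hnorm0 := norm_nonneg (y : AddCircle ((2 : ℝ) ^ (m + 2)))
      have hperiod : (2 : ℝ) ^ (m + 2) = 4 * 2 ^ m := by ring
      rw [abs_of_pos hp] at hnorm
      have := hx.1
      exact (abs_le.2 ⟨by linarith, by linarith⟩).trans (le_max_left x 0)
    | succ n ih => exact le_min ih (abs_sub_norm_le_of_mem_slab hx n y)

end BranchingPhase

section UnitSlopes

/-- Both partial slopes of `F` equal `±1` on the square of radius `r` around `(x, y)`: there the
phase `F` is that of a helical ground state. -/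
def HasUnitSlopes (F : ℝ → ℝ → ℝ) (r x y : ℝ) : Prop :=
  ∃ σ τ c : ℝ, |σ| = 1 ∧ |τ| = 1 ∧
    ∀ x' y', |x' - x| ≤ r → |y' - y| ≤ r → F x' y' = c + σ * x' + τ * y'

/-- The point `(x, y)` lies near a kink of the zigzag distance in the slab `c ≤ x ≤ 2 * c`. Points
near `y = ± x` are taken modulo `2 * c` instead of `4 * c`, so that one period serves all kinks. -/
def NearBranch (c x y : ℝ) : Prop :=
  x ∈ Set.Icc c (2 * c) ∧
    ∃ v ∈ ({0, x, -x} : Finset ℝ), ‖((y - v : ℝ) : AddCircle (2 * c))‖ ≤ 6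

lemma exists_abs_eq_mul_of_lt_abs {a r : ℝ} (h : r < |a|) :
    ∃ σ : ℝ, |σ| = 1 ∧ ∀ b, |b - a| ≤ r → |b| = σ * b := by
  rcases lt_abs.1 h with ha | ha
  · refine ⟨1, abs_one, fun b hb ↦ ?_⟩
    rw [one_mul, abs_of_nonneg (by linarith [(abs_le.1 hb).1])]
  · refine ⟨-1, by simp, fun b hb ↦ ?_⟩
    rw [neg_one_mul, abs_of_nonpos (by linarith [(abs_le.1 hb).2])]

lemma exists_norm_coe_addCircle_eq_mul {p y r : ℝ} (hp : 0 < p)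
    (hy : r < ‖(y : AddCircle (p / 2))‖) :
    ∃ (σ : ℝ) (k : ℤ), |σ| = 1 ∧
      ∀ y', |y' - y| ≤ r → ‖(y' : AddCircle p)‖ = σ * (y' - k * p) := by
  set k : ℤ := round (p⁻¹ * y)
  have hk : |y - k * p| ≤ p / 2 := by
    simpa [AddCircle.norm_eq, abs_of_pos hp, k] using
      AddCircle.norm_le_half_period p hp.ne' (x := (y : AddCircle p))
  have hshift (l : ℤ) : r < |y - k * p - l * (p / 2)| := by
    refine (hy.trans_le (norm_coe_addCircle_le_abs_sub _ y (2 * k + l))).trans_eq (congrArg _ ?_)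
    push_cast
    ring
  have h0 : r < |y - k * p| := by simpa using hshift 0
  have hgap : |y - k * p| < p / 2 - r := by
    have h1 := hshift 1
    have h2 := hshift (-1)
    have hk' := abs_le.1 hk
    rw [Int.cast_one, one_mul, abs_of_nonpos (by linarith)] at h1
    rw [abs_of_nonneg (by push_cast; linarith)] at h2
    push_cast at h2
    exact abs_lt.2 ⟨by linarith, by linarith⟩
  obtain ⟨σ, hσ, hmul⟩ := exists_abs_eq_mul_of_lt_abs h0
  refine ⟨σ, k, hσ, fun y' hy' ↦ ?_⟩
  have hdiff : (y' - k * p) - (y - k * p) = y' - y := by ring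
  have hcoe : (y' : AddCircle p) = ((y' - k * p : ℝ) : AddCircle p) := by
    rw [AddCircle.coe_sub, ← zsmul_eq_mul, AddCircle.coe_zsmul, AddCircle.coe_period]
    simp
  rw [hcoe, ← hmul _ (by rwa [hdiff])]
  refine (AddCircle.norm_coe_eq_abs_iff p hp.ne').2 ?_
  rw [abs_of_pos hp]
  have htri := abs_add_le (y' - y) (y - k * p)
  rw [sub_add_sub_cancel] at htri
  linarith

lemma hasUnitSlopes_branchingPhase {n m : ℕ} (hmn : m < n) {x y : ℝ}
    (hx : x ∈ Set.Icc ((2 : ℝ) ^ m + 3) (2 ^ (m + 1) - 3)) (hxy : ¬ NearBranch (2 ^ m) x y) :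
    HasUnitSlopes (branchingPhase n) 3 x y := by
  have hpow : (2 : ℝ) ^ (m + 1) = 2 * 2 ^ m := by ring
  have hhalf : (2 : ℝ) ^ (m + 2) / 2 = 2 * 2 ^ m := by ring
  have hfar : ∀ v ∈ ({0, x, -x} : Finset ℝ), 6 < ‖((y - v : ℝ) : AddCircle (2 * 2 ^ m : ℝ))‖ := by
    by_contra! h
    exact hxy ⟨⟨by linarith [hx.1], by linarith [hx.2]⟩, h⟩
  have h0 := hfar 0 (by simp)
  rw [sub_zero, ← hhalf] at h0
  obtain ⟨σ, k, hσ, hnorm⟩ := exists_norm_coe_addCircle_eq_mul (p := 2 ^ (m + 2)) (by positivity)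
    (by linarith : 3 < ‖(y : AddCircle ((2 : ℝ) ^ (m + 2) / 2))‖)
  have hkink : 6 < |x - σ * (y - k * 2 ^ (m + 2))| := by
    have hσx : σ * x ∈ ({0, x, -x} : Finset ℝ) := by
      rcases eq_or_eq_neg_of_abs_eq hσ with rfl | rfl <;> simp
    have hσσ : σ * σ = 1 := by rw [← abs_mul_abs_self, hσ, one_mul]
    have hfold : x - σ * (y - k * 2 ^ (m + 2)) =
        -σ * (y - σ * x - (2 * k : ℤ) * (2 * 2 ^ m)) := by
      push_cast
      linear_combination (-x) * hσσ
    rw [hfold, abs_mul, abs_neg, hσ, one_mul]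
    exact (hfar _ hσx).trans_le (norm_coe_addCircle_le_abs_sub _ _ _)
  obtain ⟨τ, hτ, hmul⟩ := exists_abs_eq_mul_of_lt_abs hkink
  refine ⟨τ, -(τ * σ), τ * σ * k * 2 ^ (m + 2), hτ, by rw [abs_neg, abs_mul, hτ, hσ, one_mul],
    fun x' y' hx' hy' ↦ ?_⟩
  have hslab : x' ∈ Set.Icc ((2 : ℝ) ^ m) (2 ^ (m + 1)) := by
    have := abs_le.1 hx'
    exact ⟨by linarith [hx.1], by linarith [hx.2]⟩
  rw [branchingPhase_of_mem_slab hmn hslab, hnorm y' hy', hmul]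
  · ring
  · calc _ = |(x' - x) - σ * (y' - y)| := by ring_nf
      _ ≤ |x' - x| + |σ * (y' - y)| := abs_sub _ _
      _ ≤ 6 := by rw [abs_mul, hσ]; linarith

lemma exists_near_of_not_hasUnitSlopes {n : ℕ} {x y : ℝ} (hx : x ∈ Set.Ico 0 ((2 : ℝ) ^ n))
    (h : ¬ HasUnitSlopes (branchingPhase n) 3 x y) :
    ∃ m ∈ range (n + 1), |x - 2 ^ m| ≤ 3 ∨ NearBranch (2 ^ m) x y := by
  contrapose! h
  have hx1 : 1 ≤ x := by
    have h0 := (h 0 (by simp)).1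
    rcases lt_abs.1 h0 with h0 | h0 <;> linarith [hx.1, pow_zero (2 : ℝ)]
  obtain ⟨m, hm⟩ := exists_nat_pow_near hx1 one_lt_two
  have hmn : m < n := (pow_lt_pow_iff_right₀ (one_lt_two : (1 : ℝ) < 2)).1 (hm.1.trans_lt hx.2)
  have hlo := (h m (mem_range.2 (by omega))).1
  have hhi := (h (m + 1) (mem_range.2 (by omega))).1
  rw [abs_of_nonneg (by linarith)] at hlo
  rw [abs_of_nonpos (by linarith)] at hhi
  exact hasUnitSlopes_branchingPhase hmn ⟨by linarith, by linarith⟩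
    (h m (mem_range.2 (by omega))).2

end UnitSlopes

section BoxAverage

/-- The average of the lattice function `G` over the box of side `W` whose upper right corner is
`(i, j)`. -/
noncomputable def boxAverage (W : ℕ) (G : ℤ → ℤ → ℝ) (i j : ℤ) : ℝ :=
  (∑ a ∈ range W, ∑ b ∈ range W, G (i - a) (j - b)) / W ^ 2

variable {W : ℕ} {G : ℤ → ℤ → ℝ} {i j i' j' : ℤ} {s : ℝ}

lemma boxAverage_swap (W : ℕ) (G : ℤ → ℤ → ℝ) (i j : ℤ) :
    boxAverage W (fun k l ↦ G l k) j i = boxAverage W G i j := by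
  rw [boxAverage, boxAverage, sum_comm]

lemma boxAverage_sub (W : ℕ) (G : ℤ → ℤ → ℝ) (i j i' j' : ℤ) :
    boxAverage W G i' j' - boxAverage W G i j =
      (∑ a ∈ range W, ∑ b ∈ range W, (G (i' - a) (j' - b) - G (i - a) (j - b))) / W ^ 2 := by
  simp only [boxAverage, ← sub_div, sum_sub_distrib]

lemma boxAverage_sub_eq (hW : W ≠ 0)
    (h : ∀ a ∈ range W, ∀ b ∈ range W, G (i' - a) (j' - b) - G (i - a) (j - b) = s) :
    boxAverage W G i' j' - boxAverage W G i j = s := by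
  have hsum := sum_congr rfl fun a ha ↦ sum_congr rfl (h a ha)
  rw [boxAverage_sub, hsum]
  simp only [sum_const, card_range, nsmul_eq_mul]
  field_simp

lemma abs_boxAverage_sub_le (hW : W ≠ 0)
    (h : ∀ a ∈ range W, ∀ b ∈ range W, |G (i' - a) (j' - b) - G (i - a) (j - b)| ≤ s) :
    |boxAverage W G i' j' - boxAverage W G i j| ≤ s := by
  rw [boxAverage_sub, abs_div, abs_of_nonneg (by positivity : (0 : ℝ) ≤ W ^ 2),
    div_le_iff₀ (by positivity)]
  calc _ ≤ ∑ a ∈ range W, ∑ b ∈ range W, |G (i' - a) (j' - b) - G (i - a) (j - b)| :=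
        (abs_sum_le_sum_abs _ _).trans (sum_le_sum fun _ _ ↦ abs_sum_le_sum_abs _ _)
    _ ≤ ∑ _a ∈ range W, ∑ _b ∈ range W, s :=
        sum_le_sum fun a ha ↦ sum_le_sum fun b hb ↦ h a ha b hb
    _ = s * W ^ 2 := by
        simp only [sum_const, card_range, nsmul_eq_mul]
        ring

lemma boxAverage_add_one_sub (W : ℕ) (G : ℤ → ℤ → ℝ) (i j : ℤ) :
    boxAverage W G (i + 1) j - boxAverage W G i j =
      (∑ b ∈ range W, (G (i + 1) (j - b) - G (i + 1 - W) (j - b))) / W ^ 2 := by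
  rw [boxAverage_sub, sum_comm]
  congr 1
  refine sum_congr rfl fun b _ ↦ ?_
  have htelescope := sum_range_sub' (fun a : ℕ ↦ G (i + 1 - a) (j - b)) W
  simp only [Nat.cast_zero, sub_zero, Nat.cast_add, Nat.cast_one, add_sub_add_right_eq_sub]
    at htelescope
  exact htelescope

lemma abs_boxAverage_second_diff_le (W : ℕ) (h : ∀ k l, |G (k + 1) l - G k l| ≤ s) (i j : ℤ) :
    |boxAverage W G (i - 1) j - 2 * boxAverage W G i j + boxAverage W G (i + 1) j| ≤
      2 * s / W := by
  set d : ℕ → ℝ := fun b ↦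
    (G (i + 1) (j - b) - G i (j - b)) - (G (i + 1 - W) (j - b) - G (i - W) (j - b)) with hd
  have hsecond : boxAverage W G (i - 1) j - 2 * boxAverage W G i j + boxAverage W G (i + 1) j =
      (∑ b ∈ range W, d b) / W ^ 2 := by
    have h1 := boxAverage_add_one_sub W G i j
    have h0 := boxAverage_add_one_sub W G (i - 1) j
    rw [sub_add_cancel] at h0
    calc _ = (boxAverage W G (i + 1) j - boxAverage W G i j) -
          (boxAverage W G i j - boxAverage W G (i - 1) j) := by ring
      _ = _ := by
        rw [h1, h0, ← sub_div, ← sum_sub_distrib]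
        simp only [hd]
        congr 2 with b
        ring
  have hdle : ∀ b, |d b| ≤ 2 * s := fun b ↦ by
    have h2 := h (i - W) (j - b)
    rw [sub_add_eq_add_sub] at h2
    exact (abs_sub _ _).trans (by linarith [h i (j - b)])
  rw [hsecond, abs_div, abs_of_nonneg (by positivity : (0 : ℝ) ≤ W ^ 2)]
  calc |∑ b ∈ range W, d b| / W ^ 2 ≤ (∑ _b ∈ range W, 2 * s) / W ^ 2 := by
        gcongr
        exact (abs_sum_le_sum_abs _ _).trans (sum_le_sum fun b _ ↦ hdle b)
    _ = 2 * s / W := by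
        rw [sum_const, card_range, nsmul_eq_mul]
        rcases W.eq_zero_or_pos with rfl | hW
        · simp
        · field_simp

end BoxAverage

section BranchingField

variable {n : ℕ} {θ : ℝ} {i j : ℤ}

/-- The branching phase sampled on the lattice with helix angle `θ` and averaged over boxes whose
side is comparable to one helix period, which turns kinks into second differences of order
`θ ^ 2`. -/
noncomputable def smoothedBranchingPhase (n : ℕ) (θ : ℝ) : ℤ → ℤ → ℝ :=
  boxAverage ⌈θ⁻¹⌉₊ fun i j ↦ branchingPhase n (θ * i) (θ * j)

lemma smoothedBranchingPhase_zero (hθ : 0 ≤ θ) (n : ℕ) (j : ℤ) :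
    smoothedBranchingPhase n θ 0 j = 0 := by
  have hle (a : ℕ) : θ * ((0 - a : ℤ) : ℝ) ≤ 0 :=
    mul_nonpos_of_nonneg_of_nonpos hθ (by push_cast; linarith [a.cast_nonneg (α := ℝ)])
  simp only [smoothedBranchingPhase, boxAverage, branchingPhase_of_nonpos n (hle _),
    sum_const_zero, zero_div]

lemma abs_branchingPhase_mul_add_one_sub_le (hθ : 0 ≤ θ) (n : ℕ) (x y : ℝ) :
    |branchingPhase n (θ * (x + 1)) (θ * y) - branchingPhase n (θ * x) (θ * y)| ≤ θ ∧
      |branchingPhase n (θ * x) (θ * (y + 1)) - branchingPhase n (θ * x) (θ * y)| ≤ θ := by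
  constructor
  · simpa [mul_add, abs_of_nonneg hθ] using
      abs_branchingPhase_sub_le n (θ * (x + 1)) (θ * x) (θ * y) (θ * y)
  · simpa [mul_add, abs_of_nonneg hθ] using
      abs_branchingPhase_sub_le n (θ * x) (θ * x) (θ * (y + 1)) (θ * y)

lemma abs_smoothedBranchingPhase_sub_le (hθ : 0 < θ) (n : ℕ) (i j : ℤ) :
    |smoothedBranchingPhase n θ (i + 1) j - smoothedBranchingPhase n θ i j| ≤ θ ∧
      |smoothedBranchingPhase n θ i (j + 1) - smoothedBranchingPhase n θ i j| ≤ θ := by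
  have hW : ⌈θ⁻¹⌉₊ ≠ 0 := (Nat.ceil_pos.2 (inv_pos.2 hθ)).ne'
  have hstep := abs_branchingPhase_mul_add_one_sub_le hθ.le n
  constructor <;> refine abs_boxAverage_sub_le hW fun a _ b _ ↦ ?_
  · rw [add_sub_right_comm, Int.cast_add, Int.cast_one]
    exact (hstep _ _).1
  · rw [add_sub_right_comm, Int.cast_add, Int.cast_one]
    exact (hstep _ _).2

lemma two_mul_div_ceil_inv_le (hθ : 0 < θ) : 2 * θ / ⌈θ⁻¹⌉₊ ≤ 2 * θ ^ 2 := by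
  have hW : 0 < ⌈θ⁻¹⌉₊ := Nat.ceil_pos.2 (inv_pos.2 hθ)
  have hθW : 1 ≤ θ * ⌈θ⁻¹⌉₊ := by
    rw [← mul_inv_cancel₀ hθ.ne']
    gcongr
    exact Nat.le_ceil _
  rw [div_le_iff₀ (by exact_mod_cast hW)]
  nlinarith

lemma abs_smoothedBranchingPhase_second_diff_le (hθ : 0 < θ) (n : ℕ) (i j : ℤ) :
    |smoothedBranchingPhase n θ (i - 1) j - 2 * smoothedBranchingPhase n θ i j +
        smoothedBranchingPhase n θ (i + 1) j| ≤ 2 * θ ^ 2 ∧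
      |smoothedBranchingPhase n θ i (j - 1) - 2 * smoothedBranchingPhase n θ i j +
        smoothedBranchingPhase n θ i (j + 1)| ≤ 2 * θ ^ 2 := by
  have hstep := abs_branchingPhase_mul_add_one_sub_le hθ.le n
  constructor
  · refine (abs_boxAverage_second_diff_le _ (fun k l ↦ ?_) i j).trans (two_mul_div_ceil_inv_le hθ)
    rw [Int.cast_add, Int.cast_one]
    exact (hstep k l).1
  · simp only [smoothedBranchingPhase]
    simp only [← boxAverage_swap _ fun i j : ℤ ↦ branchingPhase n (θ * i) (θ * j)]
    refine (abs_boxAverage_second_diff_le _ (fun k l ↦ ?_) j i).trans (two_mul_div_ceil_inv_le hθ)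
    rw [Int.cast_add, Int.cast_one]
    exact (hstep l k).2

lemma exists_smoothedBranchingPhase_sub_eq (hθ : θ ∈ Set.Ioc 0 2)
    (h : HasUnitSlopes (branchingPhase n) 3 (θ * i) (θ * j)) :
    ∃ σ τ : ℝ, |σ| = 1 ∧ |τ| = 1 ∧ ∀ i' j' : ℤ, |i' - i| ≤ 1 → |j' - j| ≤ 1 →
      smoothedBranchingPhase n θ i' j' - smoothedBranchingPhase n θ i j =
        σ * θ * (i' - i) + τ * θ * (j' - j) := by
  obtain ⟨σ, τ, c, hσ, hτ, haffine⟩ := h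
  refine ⟨σ, τ, hσ, hτ, fun i' j' hi hj ↦ ?_⟩
  have hW : ⌈θ⁻¹⌉₊ ≠ 0 := (Nat.ceil_pos.2 (inv_pos.2 hθ.1)).ne'
  have hnear : ∀ a ∈ range ⌈θ⁻¹⌉₊, ∀ k k' : ℤ, |k' - k| ≤ 1 →
      |θ * ((k' - a : ℤ) : ℝ) - θ * k| ≤ 3 := fun a ha k k' hk ↦ by
    have haθ : θ * a ≤ 1 := by
      rw [← mul_inv_cancel₀ hθ.1.ne']
      exact mul_le_mul_of_nonneg_left (Nat.lt_ceil.1 (mem_range.1 ha)).le hθ.1.le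
    have hk' : |(k' : ℝ) - k| ≤ 1 := by exact_mod_cast hk
    calc _ = |θ * (k' - k) - θ * a| := by push_cast; ring_nf
      _ ≤ |θ * (k' - k)| + |θ * a| := abs_sub _ _
      _ ≤ θ * 1 + 1 := by
        rw [abs_mul, abs_of_nonneg hθ.1.le, abs_of_nonneg (mul_nonneg hθ.1.le a.cast_nonneg)]
        gcongr
        exact hθ.1.le
      _ ≤ 3 := by linarith [hθ.2]
  refine boxAverage_sub_eq hW fun a ha b hb ↦ ?_
  rw [haffine _ _ (hnear a ha i i' hi) (hnear b hb j j' hj),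
    haffine _ _ (hnear a ha i i (by simp)) (hnear b hb j j (by simp))]
  push_cast
  ring

lemma helicalDefect_circleExp_le {p q r : ℝ} (hpq : |q - p| ≤ θ)
    (hpqr : |p - 2 * q + r| ≤ 2 * θ ^ 2) :
    helicalDefect (Real.cos θ) (Circle.exp p) (Circle.exp q) (Circle.exp r) ≤ 20 * θ ^ 4 := by
  have hsq : (q - p) ^ 2 ≤ θ ^ 2 := sq_le_sq' (by linarith [(abs_le.1 hpq).1]) (abs_le.1 hpq).2
  have hdiff : ‖(Circle.exp p : ℂ) - 2 * Circle.exp q + Circle.exp r‖ ≤ 3 * θ ^ 2 :=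
    (norm_circleExp_second_diff_le_add p q r).trans (by linarith)
  calc _ ≤ 2 * (3 * θ ^ 2) ^ 2 + 2 * θ ^ 4 := (helicalDefect_cos_le _ _ _ _).trans (by gcongr)
    _ = 20 * θ ^ 4 := by ring

lemma helicalDefect_circleExp_eq_zero {p q r σ : ℝ} (hσ : |σ| = 1) (hpq : p - q = -(σ * θ))
    (hqr : r - q = σ * θ) :
    helicalDefect (Real.cos θ) (Circle.exp p) (Circle.exp q) (Circle.exp r) = 0 := by
  have hcos : Real.cos θ = Real.cos (σ * θ) := by
    rcases eq_or_eq_neg_of_abs_eq hσ with rfl | rfl <;> simp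
  obtain rfl : p = q - σ * θ := by linarith
  obtain rfl : r = q + σ * θ := by linarith
  rw [hcos, helicalDefect_cos_circleExp]

open Classical in
/-- Bounds the defects of the branching field: they vanish where the phase has slopes `±1`. -/
noncomputable def branchingDefectBound (n : ℕ) (θ : ℝ) (i j : ℤ) : ℝ :=
  if HasUnitSlopes (branchingPhase n) 3 (θ * i) (θ * j) then 0 else 20 * θ ^ 4

lemma helicalDefect_smoothedBranchingPhase_le (hθ : θ ∈ Set.Ioc 0 2) (n : ℕ) (i j : ℤ) :
    helicalDefect (Real.cos θ) (Circle.exp (smoothedBranchingPhase n θ (i - 1) j))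
        (Circle.exp (smoothedBranchingPhase n θ i j))
        (Circle.exp (smoothedBranchingPhase n θ (i + 1) j)) ≤ branchingDefectBound n θ i j ∧
      helicalDefect (Real.cos θ) (Circle.exp (smoothedBranchingPhase n θ i (j - 1)))
        (Circle.exp (smoothedBranchingPhase n θ i j))
        (Circle.exp (smoothedBranchingPhase n θ i (j + 1))) ≤ branchingDefectBound n θ i j := by
  unfold branchingDefectBound
  split_ifs with h
  · obtain ⟨σ, τ, hσ, hτ, hsub⟩ := exists_smoothedBranchingPhase_sub_eq hθ h
    constructor
    · exact (helicalDefect_circleExp_eq_zero hσ (by rw [hsub] <;> simp)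
        (by rw [hsub] <;> simp)).le
    · exact (helicalDefect_circleExp_eq_zero hτ (by rw [hsub] <;> simp)
        (by rw [hsub] <;> simp)).le
  · have hfirstH := (abs_smoothedBranchingPhase_sub_le hθ.1 n (i - 1) j).1
    have hfirstV := (abs_smoothedBranchingPhase_sub_le hθ.1 n i (j - 1)).2
    have hsecond := abs_smoothedBranchingPhase_second_diff_le hθ.1 n i j
    rw [sub_add_cancel] at hfirstH hfirstV
    exact ⟨helicalDefect_circleExp_le hfirstH hsecond.1,
      helicalDefect_circleExp_le hfirstV hsecond.2⟩

end BranchingField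

section Counting

variable {S : Finset ℤ} {θ : ℝ}

lemma card_filter_mul_mem_Icc_le {a b : ℝ} (S : Finset ℤ) (hθ : 0 < θ) (hab : a ≤ b) :
    (#(S.filter fun i : ℤ ↦ θ * (i : ℝ) ∈ Set.Icc a b) : ℝ) ≤ (b - a) / θ + 1 := by
  rw [sub_div]
  refine card_le_of_forall_mem_Icc (by gcongr) fun i hi ↦ ?_
  have hi' := (mem_filter.1 hi).2
  exact ⟨(div_le_iff₀' hθ).2 hi'.1, (le_div_iff₀' hθ).2 hi'.2⟩

lemma card_filter_abs_mul_sub_le {r : ℝ} (S : Finset ℤ) (hθ : 0 < θ) (hr : 0 ≤ r) (v : ℝ) :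
    (#(S.filter fun i : ℤ ↦ |θ * (i : ℝ) - v| ≤ r) : ℝ) ≤ 2 * r / θ + 1 := by
  have hfilter : (S.filter fun i : ℤ ↦ |θ * (i : ℝ) - v| ≤ r) =
      S.filter fun i : ℤ ↦ θ * (i : ℝ) ∈ Set.Icc (v - r) (v + r) :=
    filter_congr fun i _ ↦ by rw [abs_sub_comm, Set.mem_Icc_iff_abs_le]
  rw [hfilter]
  exact (card_filter_mul_mem_Icc_le S hθ (by linarith)).trans_eq (by ring)

lemma card_filter_norm_coe_addCircle_le {p r a b : ℝ} (hθ : 0 < θ) (hp : 0 < p) (hr : 0 ≤ r)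
    (hab : a ≤ b) (hS : ∀ j ∈ S, θ * (j : ℝ) ∈ Set.Icc a b) (v : ℝ) :
    (#(S.filter fun j : ℤ ↦ ‖((θ * j - v : ℝ) : AddCircle p)‖ ≤ r) : ℝ) ≤
      ((b - a) / p + 2) * (2 * r / θ + 1) := by
  have hsum := sum_comp_norm_coe_addCircle_le (S := S) (x := fun j ↦ θ * j - v)
    (F := fun t ↦ if |t| ≤ r then 1 else 0) (a := a - v) (b := b - v) (B := 2 * r / θ + 1)
    hp (by linarith) (fun j hj ↦ ⟨by linarith [(hS j hj).1], by linarith [(hS j hj).2]⟩)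
    (fun t ↦ by split_ifs <;> norm_num) (fun t ↦ by simp only [abs_abs]) (fun u ↦ by
      rw [← natCast_card_filter]
      simpa only [sub_sub] using card_filter_abs_mul_sub_le S hθ hr (v + u))
  simpa only [abs_norm, ← natCast_card_filter, sub_sub_sub_cancel_right] using hsum

variable {L c : ℝ}

lemma card_strip_le (hθ : θ ∈ Set.Ioc 0 2) (hScard : (#S : ℝ) ≤ 3 / 2 * (L / θ)) (c : ℝ) :
    (#{q ∈ S ×ˢ S | |θ * (q.1 : ℝ) - c| ≤ 3} : ℝ) ≤ 12 * (L / θ ^ 2) := by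
  have hθ0 := hθ.1
  have hone : 1 ≤ 2 / θ := (one_le_div hθ0).2 hθ.2
  have hcols : (#(S.filter fun i : ℤ ↦ |θ * (i : ℝ) - c| ≤ 3) : ℝ) ≤ 8 / θ :=
    (card_filter_abs_mul_sub_le S hθ0 (by norm_num) c).trans (by
      rw [show (8 : ℝ) / θ = 2 * 3 / θ + 2 / θ by ring]
      linarith)
  have hprod : {q ∈ S ×ˢ S | |θ * (q.1 : ℝ) - c| ≤ 3} =
      (S.filter fun i : ℤ ↦ |θ * (i : ℝ) - c| ≤ 3) ×ˢ S := by
    ext q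
    simp only [mem_filter, mem_product]
    tauto
  rw [hprod, card_product]
  push_cast
  calc _ ≤ 8 / θ * (3 / 2 * (L / θ)) := by gcongr
    _ = 12 * (L / θ ^ 2) := by field_simp; ring

open Classical in
lemma card_nearBranch_column_le (hθ : θ ∈ Set.Ioc 0 2) (hc : 0 < c) (hcL : c ≤ 2 * L)
    (hS : ∀ j ∈ S, θ * (j : ℝ) ∈ Set.Icc 0 L) (x : ℝ) :
    (#(S.filter fun j : ℤ ↦ NearBranch c x (θ * j)) : ℝ) ≤ 189 * (L / (c * θ)) := by
  have hθ0 := hθ.1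
  have hone : 1 ≤ 2 / θ := (one_le_div hθ0).2 hθ.2
  have hLc : 2 ≤ 4 * (L / c) := by rw [← mul_div_assoc, le_div_iff₀ hc]; linarith
  have hL : 0 ≤ L := by linarith
  have hsub : (S.filter fun j : ℤ ↦ NearBranch c x (θ * j)) ⊆
      ({0, x, -x} : Finset ℝ).biUnion fun v ↦
        S.filter fun j : ℤ ↦ ‖((θ * j - v : ℝ) : AddCircle (2 * c))‖ ≤ 6 := by
    intro j hj
    obtain ⟨hjS, -, v, hv, hnorm⟩ := mem_filter.1 hj
    exact mem_biUnion.2 ⟨v, hv, mem_filter.2 ⟨hjS, hnorm⟩⟩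
  calc (#(S.filter fun j : ℤ ↦ NearBranch c x (θ * j)) : ℝ)
      ≤ ∑ v ∈ ({0, x, -x} : Finset ℝ),
          (#(S.filter fun j : ℤ ↦ ‖((θ * j - v : ℝ) : AddCircle (2 * c))‖ ≤ 6) : ℝ) := by
        exact_mod_cast (card_le_card hsub).trans card_biUnion_le
    _ ≤ ∑ _v ∈ ({0, x, -x} : Finset ℝ), ((L - 0) / (2 * c) + 2) * (2 * 6 / θ + 1) :=
        sum_le_sum fun v _ ↦ card_filter_norm_coe_addCircle_le hθ0 (by positivity) (by norm_num)
          (by linarith) hS v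
    _ ≤ 3 * (9 / 2 * (L / c) * (14 / θ)) := by
        rw [sum_const, nsmul_eq_mul]
        gcongr ?_ * (?_ * ?_)
        · exact_mod_cast card_le_three
        · rw [sub_zero, mul_comm 2 c, ← div_div]
          linarith
        · rw [show (14 : ℝ) / θ = 2 * 6 / θ + 2 / θ by ring]
          linarith
    _ = 189 * (L / (c * θ)) := by field_simp; ring

open Classical in
lemma card_nearBranch_le (hθ : θ ∈ Set.Ioc 0 2) (hc : 1 ≤ c) (hcL : c ≤ 2 * L)
    (hS : ∀ j ∈ S, θ * (j : ℝ) ∈ Set.Icc 0 L) :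
    (#{q ∈ S ×ˢ S | NearBranch c (θ * q.1) (θ * q.2)} : ℝ) ≤ 567 * (L / θ ^ 2) := by
  have hθ0 := hθ.1
  have hone : 1 ≤ 2 / θ := (one_le_div hθ0).2 hθ.2
  have hL : 0 ≤ L := by linarith
  set T := S.filter fun i : ℤ ↦ θ * (i : ℝ) ∈ Set.Icc c (2 * c) with hT
  have hTcard : (#T : ℝ) ≤ 3 * (c / θ) := by
    have hcols := card_filter_mul_mem_Icc_le S hθ0 (by linarith : c ≤ 2 * c)
    have hcθ : 2 / θ ≤ 2 * (c / θ) := by rw [← mul_div_assoc]; gcongr; linarith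
    rw [two_mul, add_sub_cancel_right] at hcols
    rw [hT, two_mul]
    linarith
  have hsub : {q ∈ S ×ˢ S | NearBranch c (θ * q.1) (θ * q.2)} ⊆
      {q ∈ T ×ˢ S | NearBranch c (θ * q.1) (θ * q.2)} := by
    intro q hq
    simp only [mem_filter, mem_product, hT] at hq ⊢
    exact ⟨⟨⟨hq.1.1, hq.2.1⟩, hq.1.2⟩, hq.2⟩
  calc (#{q ∈ S ×ˢ S | NearBranch c (θ * q.1) (θ * q.2)} : ℝ)
      ≤ #{q ∈ T ×ˢ S | NearBranch c (θ * q.1) (θ * q.2)} := by exact_mod_cast card_le_card hsub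
    _ = ∑ i ∈ T, (#(S.filter fun j : ℤ ↦ NearBranch c (θ * i) (θ * j)) : ℝ) := by
        simp only [natCast_card_filter, sum_product]
    _ ≤ ∑ _i ∈ T, 189 * (L / (c * θ)) := sum_le_sum fun i _ ↦
        card_nearBranch_column_le hθ (by linarith) hcL hS _
    _ ≤ 3 * (c / θ) * (189 * (L / (c * θ))) := by
        rw [sum_const, nsmul_eq_mul]
        gcongr
    _ = 567 * (L / θ ^ 2) := by field_simp; ring

open Classical in
lemma card_not_hasUnitSlopes_le {n : ℕ} (hθ : θ ∈ Set.Ioc 0 2)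
    (hScard : (#S : ℝ) ≤ 3 / 2 * (L / θ)) (hS : ∀ j ∈ S, θ * (j : ℝ) ∈ Set.Icc 0 L)
    (hLn : L < 2 ^ n) (hnL : 2 ^ n ≤ 2 * L) :
    (#{q ∈ S ×ˢ S | ¬ HasUnitSlopes (branchingPhase n) 3 (θ * q.1) (θ * q.2)} : ℝ) ≤
      579 * (n + 1) * (L / θ ^ 2) := by
  have hsub : {q ∈ S ×ˢ S | ¬ HasUnitSlopes (branchingPhase n) 3 (θ * q.1) (θ * q.2)} ⊆
      (range (n + 1)).biUnion fun m ↦ {q ∈ S ×ˢ S | |θ * (q.1 : ℝ) - 2 ^ m| ≤ 3} ∪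
        {q ∈ S ×ˢ S | NearBranch (2 ^ m) (θ * q.1) (θ * q.2)} := by
    intro q hq
    obtain ⟨hqS, hslopes⟩ := mem_filter.1 hq
    have hx := hS q.1 (mem_product.1 hqS).1
    obtain ⟨m, hm, hnear⟩ :=
      exists_near_of_not_hasUnitSlopes ⟨hx.1, hx.2.trans_lt hLn⟩ hslopes
    exact mem_biUnion.2 ⟨m, hm, by simpa only [mem_union, mem_filter, hqS, true_and] using hnear⟩
  have hpow : ∀ m ∈ range (n + 1), (2 : ℝ) ^ m ≤ 2 * L := fun m hm ↦
    (pow_le_pow_right₀ one_le_two (mem_range_succ_iff.1 hm)).trans hnL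
  calc _ ≤ ∑ m ∈ range (n + 1), ((#{q ∈ S ×ˢ S | |θ * (q.1 : ℝ) - 2 ^ m| ≤ 3} : ℝ) +
        #{q ∈ S ×ˢ S | NearBranch (2 ^ m) (θ * q.1) (θ * q.2)}) := by
        exact_mod_cast (card_le_card hsub).trans
          (card_biUnion_le.trans (sum_le_sum fun m _ ↦ card_union_le _ _))
    _ ≤ ∑ _m ∈ range (n + 1), 579 * (L / θ ^ 2) := sum_le_sum fun m hm ↦ by
        linarith [card_strip_le hθ hScard (2 ^ m),
          card_nearBranch_le hθ (one_le_pow₀ one_le_two) (hpow m hm) hS]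
    _ = 579 * (n + 1) * (L / θ ^ 2) := by
        rw [sum_const, card_range, nsmul_eq_mul]
        push_cast
        ring

end Counting

section BranchingEnergy

variable {ε θ L : ℝ} {n : ℕ}

lemma sum_branchingDefectBound_le {S : Finset ℤ} (hθ : θ ∈ Set.Ioc 0 2)
    (hScard : (#S : ℝ) ≤ 3 / 2 * (L / θ)) (hS : ∀ j ∈ S, θ * (j : ℝ) ∈ Set.Icc 0 L)
    (hLn : L < 2 ^ n) (hnL : 2 ^ n ≤ 2 * L) :
    ∑ i ∈ S, ∑ j ∈ S, branchingDefectBound n θ i j ≤ 11580 * (n + 1) * (L * θ ^ 2) := by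
  classical
  have hθ0 := hθ.1
  calc ∑ i ∈ S, ∑ j ∈ S, branchingDefectBound n θ i j =
      #{q ∈ S ×ˢ S | ¬ HasUnitSlopes (branchingPhase n) 3 (θ * q.1) (θ * q.2)} *
        (20 * θ ^ 4) := by
        rw [← sum_product', ← nsmul_eq_mul, ← sum_const, sum_filter]
        simp only [branchingDefectBound, ite_not]
    _ ≤ 579 * (n + 1) * (L / θ ^ 2) * (20 * θ ^ 4) := by
        gcongr
        exact card_not_hasUnitSlopes_le hθ hScard hS hLn hnL
    _ = 11580 * (n + 1) * (L * θ ^ 2) := by field_simp; ring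

lemma card_Icc_Kof_le (hε : ε ∈ Set.Ioo 0 (1 / 2)) (hθ : 0 < θ) :
    (#(Icc 0 (Kof ε)) : ℝ) ≤ 3 / 2 * (θ / ε / θ) := by
  have hε0 := hε.1
  rw [show 3 / 2 * (θ / ε / θ) = 3 / 2 / ε by field_simp, le_div_iff₀ hε0]
  exact card_Icc_Kof_mul_le hε

lemma mul_mem_Icc_of_mem_Icc_Kof (hε : 0 < ε) (hθ : 0 ≤ θ) {j : ℤ} (hj : j ∈ Icc 0 (Kof ε)) :
    θ * (j : ℝ) ∈ Set.Icc 0 (θ / ε) := by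
  obtain ⟨hj0, hjK⟩ := mem_Icc.1 hj
  have hjK' : (j : ℝ) ≤ Kof ε := by exact_mod_cast hjK
  refine ⟨by positivity, ?_⟩
  rw [le_div_iff₀ hε, mul_assoc]
  refine mul_le_of_le_one_right hθ ?_
  exact (mul_le_mul_of_nonneg_right hjK' hε.le).trans (Kof_mul_lt_one hε).le

lemma E_branching_le (hε : ε ∈ Set.Ioo 0 (1 / 2)) (hθ : θ ∈ Set.Ioc 0 2)
    (hLn : θ / ε < 2 ^ n) (hnL : 2 ^ n ≤ 2 * (θ / ε)) :
    E ε (1 - Real.cos θ) (spinField fun i j ↦ Circle.exp (smoothedBranchingPhase n θ i j)) ≤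
      11580 * (n + 1) * (ε * θ ^ 3) := by
  have hε0 := hε.1
  have hdefect := helicalDefect_smoothedBranchingPhase_le hθ n
  calc E ε (1 - Real.cos θ) (spinField fun i j ↦ Circle.exp (smoothedBranchingPhase n θ i j))
      ≤ ε ^ 2 * ∑ i ∈ Icc 0 (Kof ε), ∑ j ∈ Icc 0 (Kof ε), branchingDefectBound n θ i j :=
        E_spinField_le (fun i j ↦ by unfold branchingDefectBound; positivity)
          (fun i _ j _ ↦ (hdefect i j).1) (fun i _ j _ ↦ (hdefect i j).2)
    _ ≤ ε ^ 2 * (11580 * (n + 1) * (θ / ε * θ ^ 2)) := by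
        gcongr
        exact sum_branchingDefectBound_le hθ (card_Icc_Kof_le hε hθ.1)
          (fun j hj ↦ mul_mem_Icc_of_mem_Icc_Kof hε0 hθ.1.le hj) hLn hnL
    _ = 11580 * (n + 1) * (ε * θ ^ 3) := by field_simp

lemma exists_branching (hε : ε ∈ Set.Ioo 0 (1 / 2)) (hθ : θ ∈ Set.Ioc 0 2) (hεθ : ε ≤ θ) :
    ∃ u, InS0 ε u ∧
      E ε (1 - Real.cos θ) u ≤ 34740 * (ε * θ ^ 3 * (Real.log (θ / ε) + 1)) := by
  have hε0 := hε.1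
  have hθ0 := hθ.1
  obtain ⟨m, hlo, hhi⟩ := exists_nat_pow_near ((one_le_div hε0).2 hεθ) one_lt_two
  refine ⟨_, inS0_spinField fun j ↦ by rw [smoothedBranchingPhase_zero hθ0.le, Circle.exp_zero],
    (E_branching_le hε hθ hhi (by rw [pow_succ']; gcongr)).trans ?_⟩
  have hm : (m : ℝ) ≤ 2 * Real.log (θ / ε) := by
    have hlog := Real.log_le_log (by positivity) hlo
    rw [Real.log_pow] at hlog
    nlinarith [Real.log_two_gt_d9, m.cast_nonneg (α := ℝ)]
  calc 11580 * ((m + 1 : ℕ) + 1) * (ε * θ ^ 3)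
      ≤ 11580 * (3 * (Real.log (θ / ε) + 1)) * (ε * θ ^ 3) := by
        gcongr
        push_cast
        linarith
    _ = 34740 * (ε * θ ^ 3 * (Real.log (θ / ε) + 1)) := by ring

end BranchingEnergy

section SecondDifferencesOfDirections

variable {V : Type*} [NormedAddCommGroup V]

lemma norm_mul_norm_sub_direction_le [NormedSpace ℝ V] {f g e e' : V} (hf : ‖f‖ • e = f)
    (hg : ‖g‖ • e' = g) (he : ‖e‖ ≤ 1) : ‖g‖ * ‖e - e'‖ ≤ 2 * ‖f - g‖ := by
  have hsplit : ‖g‖ • (e - e') = (‖g‖ - ‖f‖) • e + (f - g) := by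
    linear_combination (norm := module) hf - hg
  calc ‖g‖ * ‖e - e'‖ = ‖(‖g‖ - ‖f‖) • e + (f - g)‖ := by
        rw [← hsplit, norm_smul, norm_norm]
    _ ≤ |‖g‖ - ‖f‖| * 1 + ‖f - g‖ := by
        refine (norm_add_le _ _).trans ?_
        rw [norm_smul, Real.norm_eq_abs]
        gcongr
    _ ≤ 2 * ‖f - g‖ := by
        linarith [abs_norm_sub_norm_le g f, norm_sub_rev f g]

variable [InnerProductSpace ℝ V] {f₀ f₁ f₂ e₀ e₁ e₂ : V} {M D : ℝ}

lemma norm_mul_abs_second_diff_norm_le (h₀ : ‖f₀ - f₁‖ ≤ M) (h₂ : ‖f₂ - f₁‖ ≤ M) :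
    ‖f₁‖ * |‖f₀‖ - 2 * ‖f₁‖ + ‖f₂‖| ≤ ‖f₁‖ * ‖f₀ - (2 : ℝ) • f₁ + f₂‖ + M ^ 2 := by
  set d := f₀ - (2 : ℝ) • f₁ + f₂ with hd
  have hlo : -‖d‖ ≤ ‖f₀‖ - 2 * ‖f₁‖ + ‖f₂‖ := by
    have htri : ‖(2 : ℝ) • f₁‖ ≤ ‖f₀ + f₂‖ + ‖d‖ := by
      rw [show (2 : ℝ) • f₁ = (f₀ + f₂) - d by rw [hd]; abel]
      exact norm_sub_le _ _
    rw [norm_smul, Real.norm_two] at htri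
    linarith [norm_add_le f₀ f₂]
  have hhi : ‖f₁‖ * (‖f₀‖ - 2 * ‖f₁‖ + ‖f₂‖) ≤ ‖f₁‖ * ‖d‖ + M ^ 2 := by
    have hinner : 2 * inner ℝ f₁ d =
        ‖f₀‖ ^ 2 - 2 * ‖f₁‖ ^ 2 + ‖f₂‖ ^ 2 - ‖f₀ - f₁‖ ^ 2 - ‖f₂ - f₁‖ ^ 2 := by
      rw [norm_sub_sq_real, norm_sub_sq_real, hd, inner_add_right, inner_sub_right,
        real_inner_smul_right, real_inner_self_eq_norm_sq, real_inner_comm f₁, real_inner_comm f₁]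
      ring
    have hcs := real_inner_le_norm f₁ d
    have hsq₀ : ‖f₀ - f₁‖ ^ 2 ≤ M ^ 2 := by gcongr
    have hsq₂ : ‖f₂ - f₁‖ ^ 2 ≤ M ^ 2 := by gcongr
    linarith [sq_nonneg (‖f₀‖ - ‖f₁‖), sq_nonneg (‖f₂‖ - ‖f₁‖)]
  rw [← abs_norm f₁, ← abs_mul, abs_norm]
  refine abs_le.2 ⟨?_, hhi⟩
  linarith [mul_le_mul_of_nonneg_left hlo (norm_nonneg f₁), sq_nonneg M]

lemma sq_norm_mul_norm_second_diff_direction_le (h₀ : ‖f₀ - f₁‖ ≤ M) (h₂ : ‖f₂ - f₁‖ ≤ M)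
    (hD : ‖f₀ - (2 : ℝ) • f₁ + f₂‖ ≤ D) (hf₁ : ‖f₁‖ ≤ 1) (he₀ : ‖f₀‖ • e₀ = f₀)
    (he₁ : ‖f₁‖ • e₁ = f₁) (he₂ : ‖f₂‖ • e₂ = f₂) (hn₀ : ‖e₀‖ ≤ 1) (hn₁ : ‖e₁‖ ≤ 1)
    (hn₂ : ‖e₂‖ ≤ 1) :
    ‖f₁‖ ^ 2 * ‖e₀ - (2 : ℝ) • e₁ + e₂‖ ≤ 2 * D + 5 * M ^ 2 := by
  have hleibniz : ‖f₁‖ • (e₀ - (2 : ℝ) • e₁ + e₂) = (f₀ - (2 : ℝ) • f₁ + f₂) +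
      (‖f₁‖ - ‖f₀‖) • (e₀ - e₁) + (‖f₁‖ - ‖f₂‖) • (e₂ - e₁) -
      (‖f₀‖ - 2 * ‖f₁‖ + ‖f₂‖) • e₁ := by
    linear_combination (norm := module) he₀ - (2 : ℝ) • he₁ + he₂
  have hcross {f e : V} (hf : ‖f - f₁‖ ≤ M) (he : ‖f‖ • e = f) (hn : ‖e‖ ≤ 1) :
      ‖f₁‖ * ‖(‖f₁‖ - ‖f‖) • (e - e₁)‖ ≤ 2 * M ^ 2 := by
    have hdir := norm_mul_norm_sub_direction_le he he₁ hn
    have hnorm : |‖f₁‖ - ‖f‖| ≤ M := (abs_norm_sub_norm_le _ _).trans (norm_sub_rev f f₁ ▸ hf)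
    rw [norm_smul, Real.norm_eq_abs]
    nlinarith [mul_nonneg (norm_nonneg f₁) (norm_nonneg (e - e₁))]
  have hmod : ‖f₁‖ * ‖(‖f₀‖ - 2 * ‖f₁‖ + ‖f₂‖) • e₁‖ ≤ D + M ^ 2 := by
    rw [norm_smul, Real.norm_eq_abs, ← mul_assoc]
    have := norm_mul_abs_second_diff_norm_le h₀ h₂
    nlinarith [mul_nonneg (norm_nonneg f₁) (abs_nonneg (‖f₀‖ - 2 * ‖f₁‖ + ‖f₂‖)),
      mul_le_mul hf₁ hD (norm_nonneg _) zero_le_one]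
  calc ‖f₁‖ ^ 2 * ‖e₀ - (2 : ℝ) • e₁ + e₂‖ = ‖f₁‖ * ‖‖f₁‖ • (e₀ - (2 : ℝ) • e₁ + e₂)‖ := by
        rw [norm_smul, norm_norm]; ring
    _ ≤ ‖f₁‖ * (‖f₀ - (2 : ℝ) • f₁ + f₂‖ + ‖(‖f₁‖ - ‖f₀‖) • (e₀ - e₁)‖ +
          ‖(‖f₁‖ - ‖f₂‖) • (e₂ - e₁)‖ + ‖(‖f₀‖ - 2 * ‖f₁‖ + ‖f₂‖) • e₁‖) := by
        rw [hleibniz]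
        gcongr
        exact (norm_sub_le _ _).trans (by gcongr; exact norm_add₃_le)
    _ ≤ 2 * D + 5 * M ^ 2 := by
        linarith [hcross h₀ he₀ hn₀, hcross h₂ he₂ hn₂,
          mul_le_mul hf₁ hD (norm_nonneg _) zero_le_one]

end SecondDifferencesOfDirections

section HelixInterpolation

/-- The direction `z / ‖z‖` of a complex number. It is `1` for `z = 0`. -/
noncomputable def unitDir (z : ℂ) : Circle := Circle.exp z.arg

lemma norm_smul_unitDir (z : ℂ) : ‖z‖ • (unitDir z : ℂ) = z := by
  rw [unitDir, Circle.coe_exp, Complex.real_smul, Complex.norm_mul_exp_arg_mul_I]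

lemma unitDir_coe (z : Circle) : unitDir z = z := by
  refine Circle.ext ?_
  simpa only [Circle.norm_coe, one_smul] using norm_smul_unitDir (z : ℂ)

/-- The linear interpolation between the ferromagnetic spin (`a = 0`) and a helix (`a = 1`). -/
noncomputable def helixInterp (a t : ℝ) : ℂ := 1 + a * (Circle.exp t - 1)

variable {a b h s t θ : ℝ}

lemma sq_norm_helixInterp (a t : ℝ) :
    ‖helixInterp a t‖ ^ 2 = 1 - 2 * a * (1 - a) * (1 - Real.cos t) := by
  rw [Complex.sq_norm, Complex.normSq_apply]
  simp only [helixInterp, Circle.coe_exp, Complex.add_re, Complex.add_im, Complex.mul_re,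
    Complex.mul_im, Complex.sub_re, Complex.sub_im, Complex.one_re, Complex.one_im,
    Complex.ofReal_re, Complex.ofReal_im, Complex.exp_ofReal_mul_I_re,
    Complex.exp_ofReal_mul_I_im]
  linear_combination a ^ 2 * Real.sin_sq_add_cos_sq t

lemma norm_helixInterp_le_one (ha : a ∈ Set.Icc 0 1) (t : ℝ) : ‖helixInterp a t‖ ≤ 1 := by
  refine (sq_le_one_iff₀ (norm_nonneg _)).1 ?_
  rw [sq_norm_helixInterp]
  have := mul_nonneg (mul_nonneg ha.1 (sub_nonneg.2 ha.2)) (sub_nonneg.2 (Real.cos_le_one t))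
  linarith

lemma le_sq_norm_helixInterp (ha : a ∈ Set.Icc 0 1) (t : ℝ) :
    (1 - 2 * a) ^ 2 / 2 + (1 + Real.cos t) / 4 ≤ ‖helixInterp a t‖ ^ 2 := by
  rw [sq_norm_helixInterp]
  have := mul_nonneg ha.1 (sub_nonneg.2 ha.2)
  nlinarith [Real.cos_le_one t, Real.neg_one_le_cos t]

lemma norm_helixInterp_sub_le (ha : |a| ≤ 1) (b s t : ℝ) :
    ‖helixInterp b s - helixInterp a t‖ ≤ |s - t| + 2 * |b - a| := by
  have hsplit : helixInterp b s - helixInterp a t =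
      a * (Circle.exp s - Circle.exp t) + (b - a : ℝ) * (Circle.exp s - 1) := by
    simp only [helixInterp]
    push_cast
    ring
  have hone : ‖(Circle.exp s : ℂ) - 1‖ ≤ 2 := by
    refine (norm_sub_le _ _).trans ?_
    rw [Circle.norm_coe, norm_one, one_add_one_eq_two]
  rw [hsplit]
  refine (norm_add_le _ _).trans ?_
  rw [norm_mul, norm_mul, Complex.norm_real, Complex.norm_real, Real.norm_eq_abs,
    Real.norm_eq_abs, mul_comm 2]
  gcongr
  exact (mul_le_of_le_one_left (norm_nonneg _) ha).trans (norm_circleExp_sub_le s t)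

lemma norm_helixInterp_second_diff_le (ha : |a| ≤ 1) (h s t : ℝ) :
    ‖helixInterp (a - h) (t - s) - (2 : ℝ) • helixInterp a t + helixInterp (a + h) (t + s)‖ ≤
      s ^ 2 + 2 * |h| * |s| := by
  have hsplit : helixInterp (a - h) (t - s) - (2 : ℝ) • helixInterp a t +
      helixInterp (a + h) (t + s) =
      a * (Circle.exp (t - s) - 2 * Circle.exp t + Circle.exp (t + s)) +
        h * (Circle.exp (t + s) - Circle.exp (t - s)) := by
    simp only [helixInterp, Complex.real_smul]
    push_cast
    ring
  have hdiff := norm_circleExp_sub_le (t + s) (t - s)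
  rw [add_sub_sub_cancel, ← two_mul, abs_mul, abs_two] at hdiff
  rw [hsplit]
  refine (norm_add_le _ _).trans ?_
  rw [norm_mul, norm_mul, Complex.norm_real, Complex.norm_real, Real.norm_eq_abs,
    Real.norm_eq_abs, mul_comm 2 |h|, mul_assoc]
  gcongr
  exact (mul_le_of_le_one_left (norm_nonneg _) ha).trans (norm_circleExp_second_diff_le s t)

lemma norm_circle_second_diff_le_four (x y z : Circle) :
    ‖(x : ℂ) - 2 * y + z‖ ≤ 4 := by
  refine (norm_add_le _ _).trans ((add_le_add_left (norm_sub_le _ _) _).trans ?_)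
  rw [norm_mul, Circle.norm_coe, Circle.norm_coe, Circle.norm_coe, Complex.norm_two]
  norm_num

lemma norm_unitDir_helixInterp_second_diff_le (ha : a ∈ Set.Icc 0 1) (hθ : 0 ≤ θ) (hh : |h| ≤ θ)
    (t : ℝ) :
    (θ ^ 2 + ‖helixInterp a t‖ ^ 2) * ‖(unitDir (helixInterp (a - h) (t - θ)) : ℂ) -
      2 * unitDir (helixInterp a t) + unitDir (helixInterp (a + h) (t + θ))‖ ≤ 55 * θ ^ 2 := by
  have ha' : |a| ≤ 1 := abs_le.2 ⟨by linarith [ha.1], ha.2⟩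
  have h₀ : ‖helixInterp (a - h) (t - θ) - helixInterp a t‖ ≤ 3 * θ := by
    refine (norm_helixInterp_sub_le ha' _ _ _).trans ?_
    rw [sub_sub_cancel_left, sub_sub_cancel_left, abs_neg, abs_neg, abs_of_nonneg hθ]
    linarith
  have h₂ : ‖helixInterp (a + h) (t + θ) - helixInterp a t‖ ≤ 3 * θ := by
    refine (norm_helixInterp_sub_le ha' _ _ _).trans ?_
    rw [add_sub_cancel_left, add_sub_cancel_left, abs_of_nonneg hθ]
    linarith
  have hD := norm_helixInterp_second_diff_le ha' h θ t
  rw [abs_of_nonneg hθ] at hD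
  have hfar := sq_norm_mul_norm_second_diff_direction_le h₀ h₂
    (hD.trans (by gcongr : θ ^ 2 + 2 * |h| * θ ≤ θ ^ 2 + 2 * θ * θ))
    (norm_helixInterp_le_one ha t) (norm_smul_unitDir _) (norm_smul_unitDir _)
    (norm_smul_unitDir _) (Circle.norm_coe _).le (Circle.norm_coe _).le (Circle.norm_coe _).le
  have hnear := norm_circle_second_diff_le_four (unitDir (helixInterp (a - h) (t - θ)))
    (unitDir (helixInterp a t)) (unitDir (helixInterp (a + h) (t + θ)))
  rw [Complex.real_smul, Complex.ofReal_ofNat] at hfar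
  nlinarith [sq_nonneg θ]

end HelixInterpolation

section VortexField

variable {N : ℕ} {θ : ℝ} {i j : ℤ}

/-- The direction of the interpolation from the constant spin at `i = 0` to the diagonal helix at
`i = N`. -/
noncomputable def vortexField (N : ℕ) (θ : ℝ) (i j : ℤ) : Circle :=
  unitDir (helixInterp (min 1 (i / N)) (θ * (i + j)))

lemma vortexField_zero (N : ℕ) (θ : ℝ) (j : ℤ) : vortexField N θ 0 j = 1 := by
  rw [vortexField, Int.cast_zero, zero_div, min_eq_right zero_le_one, helixInterp,
    Complex.ofReal_zero, zero_mul, add_zero, ← Circle.coe_one, unitDir_coe]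

lemma vortexField_of_le (hi : i ≤ N) (θ : ℝ) (j : ℤ) :
    vortexField N θ i j = unitDir (helixInterp (i / N) (θ * (i + j))) := by
  have hi' : (i : ℝ) ≤ N := by exact_mod_cast hi
  rw [vortexField, min_eq_right (div_le_one_of_le₀ hi' N.cast_nonneg)]

lemma vortexField_of_ge (hN : 0 < N) (hi : N ≤ i) (θ : ℝ) (j : ℤ) :
    vortexField N θ i j = Circle.exp (θ * (i + j)) := by
  have hi' : (N : ℝ) ≤ i := by exact_mod_cast hi
  rw [vortexField, min_eq_left ((one_le_div (by exact_mod_cast hN)).2 hi'), helixInterp,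
    Complex.ofReal_one, one_mul, add_sub_cancel, unitDir_coe]

lemma div_natCast_mem_Icc (hi : i ∈ Icc 0 (N : ℤ)) : (i / N : ℝ) ∈ Set.Icc 0 1 := by
  obtain ⟨hi0, hiN⟩ := mem_Icc.1 hi
  have hiN' : (i : ℝ) ≤ N := by exact_mod_cast hiN
  exact ⟨by positivity, div_le_one_of_le₀ hiN' N.cast_nonneg⟩

/-- The decay of the energy density away from the zeros of the interpolation, which lie at `i = N/2`
and `θ * (i + j) ≡ π` modulo `2 * π`. -/
noncomputable def vortexDecay (N : ℕ) (θ : ℝ) (i j : ℤ) : ℝ :=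
  (1 + ((i : ℝ) - N / 2) ^ 2)⁻¹ *
    (1 + (‖((θ * (i + j) - π : ℝ) : AddCircle (2 * π))‖ / θ) ^ 2)⁻¹

lemma sq_norm_coe_addCircle_le_one_add_cos (t : ℝ) :
    ‖((t - π : ℝ) : AddCircle (2 * π))‖ ^ 2 ≤ 5 * (1 + Real.cos t) := by
  set d := ‖((t - π : ℝ) : AddCircle (2 * π))‖ with hd
  have hdpi : |d| ≤ π := by
    have := AddCircle.norm_le_half_period _ Real.two_pi_pos.ne'
      (x := ((t - π : ℝ) : AddCircle (2 * π)))
    rw [abs_of_pos Real.two_pi_pos, mul_div_cancel_left₀ _ two_ne_zero] at this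
    rwa [abs_norm]
  have hcos : Real.cos d = -Real.cos t := by
    rw [hd, AddCircle.norm_eq, Real.cos_abs, Real.cos_sub_int_mul_two_pi, Real.cos_sub_pi]
  have hquad := Real.cos_le_one_sub_mul_cos_sq hdpi
  have hpi : 1 / 5 ≤ 2 / π ^ 2 := by
    rw [div_le_div_iff₀ (by norm_num) (by positivity)]
    nlinarith [Real.pi_lt_d2, Real.pi_pos]
  nlinarith [mul_le_mul_of_nonneg_right hpi (sq_nonneg d)]

lemma le_vortexDecay_mul (hθ : 0 < θ) (hN : 0 < N) (hθN : θ * N ≤ 3) (hi : i ∈ Icc 0 (N : ℤ))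
    (j : ℤ) :
    (θ ^ 2) ^ 2 ≤ 100 * vortexDecay N θ i j *
      (θ ^ 2 + ‖helixInterp (i / N) (θ * (i + j))‖ ^ 2) ^ 2 := by
  have hf := le_sq_norm_helixInterp (div_natCast_mem_Icc hi) (θ * (i + j))
  have hd := sq_norm_coe_addCircle_le_one_add_cos (θ * (i + j))
  have hcos := Real.neg_one_le_cos (θ * (i + j))
  rw [vortexDecay]
  set X := θ ^ 2 + ‖helixInterp (i / N) (θ * (i + j))‖ ^ 2
  set d := ‖((θ * (i + j) - π : ℝ) : AddCircle (2 * π))‖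
  have hcolumn : θ ^ 2 * (1 + ((i : ℝ) - N / 2) ^ 2) ≤ 5 * X := by
    have hscale : θ ^ 2 * ((i : ℝ) - N / 2) ^ 2 = (θ * N) ^ 2 * (1 - 2 * (i / N)) ^ 2 / 4 := by
      field_simp
      ring
    have hsq : (θ * N) ^ 2 * (1 - 2 * ((i : ℝ) / N)) ^ 2 ≤ 3 ^ 2 * (1 - 2 * (i / N)) ^ 2 := by
      gcongr
    linarith [sq_nonneg θ, sq_nonneg (1 - 2 * ((i : ℝ) / N))]
  have hdiag : θ ^ 2 * (1 + (d / θ) ^ 2) ≤ 20 * X := by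
    have hscale : θ ^ 2 * (d / θ) ^ 2 = d ^ 2 := by field_simp
    linarith [sq_nonneg θ, sq_nonneg (1 - 2 * ((i : ℝ) / N))]
  rw [← mul_inv, mul_right_comm, ← div_eq_mul_inv, le_div_iff₀ (by positivity)]
  calc (θ ^ 2) ^ 2 * ((1 + ((i : ℝ) - N / 2) ^ 2) * (1 + (d / θ) ^ 2))
      = θ ^ 2 * (1 + ((i : ℝ) - N / 2) ^ 2) * (θ ^ 2 * (1 + (d / θ) ^ 2)) := by ring
    _ ≤ 5 * X * (20 * X) := by gcongr
    _ = 100 * X ^ 2 := by ring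

lemma helicalDefect_unitDir_helixInterp_le {h : ℝ} (hθ : 0 < θ) (hN : 0 < N) (hθN : θ * N ≤ 3)
    (hi : i ∈ Icc 0 (N : ℤ)) (hh : |h| ≤ θ) (j : ℤ) :
    helicalDefect (Real.cos θ) (unitDir (helixInterp (i / N - h) (θ * (i + j) - θ)))
      (unitDir (helixInterp (i / N) (θ * (i + j))))
      (unitDir (helixInterp (i / N + h) (θ * (i + j) + θ))) ≤
      605000 * vortexDecay N θ i j + 2 * θ ^ 4 := by
  have hdecay := le_vortexDecay_mul hθ hN hθN hi j
  have hdiff := norm_unitDir_helixInterp_second_diff_le (div_natCast_mem_Icc hi) hθ.le hh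
    (θ * (i + j))
  have hX : 0 < θ ^ 2 + ‖helixInterp (i / N) (θ * (i + j))‖ ^ 2 := by positivity
  refine (helicalDefect_cos_le θ _ _ _).trans ?_
  set D := ‖(unitDir (helixInterp (i / N - h) (θ * (i + j) - θ)) : ℂ) -
    2 * unitDir (helixInterp (i / N) (θ * (i + j))) +
    unitDir (helixInterp (i / N + h) (θ * (i + j) + θ))‖
  set X := θ ^ 2 + ‖helixInterp (i / N) (θ * (i + j))‖ ^ 2
  have hsq : D ^ 2 ≤ 302500 * vortexDecay N θ i j := by
    refine le_of_mul_le_mul_left ?_ (pow_pos hX 2)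
    calc X ^ 2 * D ^ 2 = (X * D) ^ 2 := by ring
      _ ≤ (55 * θ ^ 2) ^ 2 := by gcongr
      _ ≤ X ^ 2 * (302500 * vortexDecay N θ i j) := by linarith
  linarith

/-- An upper bound for the energy density of `vortexField` at `(i, j)`: the vortices, the deviation
from the helix angle left of `i = N`, and the kink at `i = N`. -/
noncomputable def vortexDefectBound (N : ℕ) (θ : ℝ) (i j : ℤ) : ℝ :=
  605000 * vortexDecay N θ i j + (if i ≤ N then 2 * θ ^ 4 else 0) +
    if i = N then 98 * θ ^ 2 else 0

lemma vortexDecay_nonneg (N : ℕ) (θ : ℝ) (i j : ℤ) : 0 ≤ vortexDecay N θ i j := by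
  unfold vortexDecay
  positivity

lemma vortexDefectBound_nonneg (N : ℕ) (θ : ℝ) (i j : ℤ) : 0 ≤ vortexDefectBound N θ i j := by
  have := vortexDecay_nonneg N θ i j
  unfold vortexDefectBound
  positivity

lemma le_vortexDefectBound_of_le (hi : i ≤ N) (θ : ℝ) (j : ℤ) :
    605000 * vortexDecay N θ i j + 2 * θ ^ 4 ≤ vortexDefectBound N θ i j := by
  rw [vortexDefectBound, if_pos hi]
  exact le_add_of_nonneg_right (by positivity)

lemma helicalDefect_vortexField_vertical_le (hθ : 0 < θ) (hN : 0 < N) (hθN : θ * N ≤ 3)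
    (hi : 0 ≤ i) (j : ℤ) :
    helicalDefect (Real.cos θ) (vortexField N θ i (j - 1)) (vortexField N θ i j)
      (vortexField N θ i (j + 1)) ≤ vortexDefectBound N θ i j := by
  have hpred : θ * (i + (j - 1 : ℤ)) = θ * (i + j) - θ := by push_cast; ring
  have hsucc : θ * (i + (j + 1 : ℤ)) = θ * (i + j) + θ := by push_cast; ring
  rcases le_total i N with hiN | hNi
  · rw [vortexField_of_le hiN, vortexField_of_le hiN, vortexField_of_le hiN, hpred, hsucc]
    refine le_trans ?_ (le_vortexDefectBound_of_le hiN θ j)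
    simpa only [sub_zero, add_zero] using helicalDefect_unitDir_helixInterp_le hθ hN hθN
      (mem_Icc.2 ⟨hi, hiN⟩) (abs_zero.trans_le hθ.le) j
  · rw [vortexField_of_ge hN hNi, vortexField_of_ge hN hNi, vortexField_of_ge hN hNi, hpred,
      hsucc, helicalDefect_cos_circleExp]
    exact vortexDefectBound_nonneg N θ i j

lemma norm_vortexField_second_diff_kink_le (hθ : 0 < θ) (hN : 0 < N) (hθN : 1 ≤ θ * N) (j : ℤ) :
    ‖(vortexField N θ (N - 1) j : ℂ) - 2 * vortexField N θ N j + vortexField N θ (N + 1) j‖ ≤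
      7 * θ := by
  set t : ℝ := θ * ((N : ℤ) + j) with ht
  have hN0 : (0 : ℝ) < N := by exact_mod_cast hN
  have hinv : (N : ℝ)⁻¹ ≤ θ := (inv_le_iff_one_le_mul₀ hN0).2 hθN
  have hstart : vortexField N θ (N - 1) j = unitDir (helixInterp (1 - (N : ℝ)⁻¹) (t - θ)) := by
    rw [vortexField_of_le (by omega), ht]
    congr 2
    · push_cast; field_simp
    · push_cast; ring
  have hnext : vortexField N θ (N + 1) j = Circle.exp (t + θ) := by
    rw [vortexField_of_ge hN (by omega), ht]
    push_cast
    ring_nf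
  have hone : helixInterp 1 t = Circle.exp t := by simp [helixInterp]
  have hleft := norm_mul_norm_sub_direction_le
    (norm_smul_unitDir (helixInterp (1 - (N : ℝ)⁻¹) (t - θ))) (norm_smul_unitDir (helixInterp 1 t))
    (Circle.norm_coe _).le
  have hinterp := norm_helixInterp_sub_le abs_one.le (1 - (N : ℝ)⁻¹) (t - θ) t
  rw [sub_sub_cancel_left, sub_sub_cancel_left, abs_neg, abs_neg, abs_of_pos hθ,
    abs_of_pos (inv_pos.2 hN0)] at hinterp
  rw [hone, unitDir_coe, Circle.norm_coe, one_mul, ← hone] at hleft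
  have hright := norm_circleExp_sub_le (t + θ) t
  rw [add_sub_cancel_left, abs_of_pos hθ] at hright
  rw [hstart, hnext, vortexField_of_ge hN le_rfl]
  calc ‖(unitDir (helixInterp (1 - (N : ℝ)⁻¹) (t - θ)) : ℂ) - 2 * Circle.exp t +
        Circle.exp (t + θ)‖
      = ‖((unitDir (helixInterp (1 - (N : ℝ)⁻¹) (t - θ)) : ℂ) - Circle.exp t) +
        (Circle.exp (t + θ) - Circle.exp t)‖ := by ring_nf
    _ ≤ 7 * θ := by
        refine (norm_add_le _ _).trans ?_
        rw [hone] at hleft hinterp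
        linarith

lemma helicalDefect_vortexField_horizontal_le (hθ : 0 < θ) (hN : 0 < N)
    (hθN : θ * N ∈ Set.Icc 1 3) (hi : 0 ≤ i) (j : ℤ) :
    helicalDefect (Real.cos θ) (vortexField N θ (i - 1) j) (vortexField N θ i j)
      (vortexField N θ (i + 1) j) ≤ vortexDefectBound N θ i j := by
  have hN0 : (0 : ℝ) < N := by exact_mod_cast hN
  have hpred : θ * ((i - 1 : ℤ) + j) = θ * (i + j) - θ := by push_cast; ring
  have hsucc : θ * ((i + 1 : ℤ) + j) = θ * (i + j) + θ := by push_cast; ring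
  rcases lt_trichotomy i N with hiN | rfl | hNi
  · have hh : |(N : ℝ)⁻¹| ≤ θ := by
      rw [abs_of_pos (inv_pos.2 hN0)]
      exact (inv_le_iff_one_le_mul₀ hN0).2 hθN.1
    have hdefect := helicalDefect_unitDir_helixInterp_le hθ hN hθN.2 (mem_Icc.2 ⟨hi, hiN.le⟩) hh j
    rw [vortexField_of_le (by omega), vortexField_of_le hiN.le, vortexField_of_le (by omega),
      hpred, hsucc, Int.cast_sub, Int.cast_add, Int.cast_one, sub_div, add_div, one_div]
    exact hdefect.trans (le_vortexDefectBound_of_le hiN.le θ j)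
  · have hkink := norm_vortexField_second_diff_kink_le hθ hN hθN.1 j
    have hdecay := vortexDecay_nonneg N θ N j
    rw [vortexDefectBound, if_pos le_rfl, if_pos rfl]
    refine (helicalDefect_cos_le θ _ _ _).trans ?_
    nlinarith [pow_le_pow_left₀ (norm_nonneg _) hkink 2]
  · rw [vortexField_of_ge hN (by omega), vortexField_of_ge hN hNi.le,
      vortexField_of_ge hN (by omega), hpred, hsucc, helicalDefect_cos_circleExp]
    exact vortexDefectBound_nonneg N θ i j

end VortexField

section VortexEnergy

variable {N : ℕ} {S : Finset ℤ} {ε θ L C : ℝ}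

lemma sum_vortexDecay_le (hC : ∀ (T : Finset ℤ) (c : ℝ), ∑ j ∈ T, (1 + ((j : ℝ) - c) ^ 2)⁻¹ ≤ C)
    (hθ : 0 < θ) (hL : 1 ≤ L) (hS : ∀ j ∈ S, θ * (j : ℝ) ∈ Set.Icc 0 L) (N : ℕ) :
    ∑ i ∈ S, ∑ j ∈ S, vortexDecay N θ i j ≤ 3 * C ^ 2 * L := by
  have hC0 : 0 ≤ C := hC ∅ 0
  have hcolumn (i : ℤ) :
      ∑ j ∈ S, (1 + (‖((θ * (i + j) - π : ℝ) : AddCircle (2 * π))‖ / θ) ^ 2)⁻¹ ≤ 3 * L * C := by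
    refine (sum_comp_norm_coe_addCircle_le (F := fun t ↦ (1 + (t / θ) ^ 2)⁻¹) (a := θ * i - π)
      (b := θ * i - π + L) (B := C) Real.two_pi_pos (by linarith) (fun j hj ↦ ?_)
      (fun t ↦ by positivity) (fun t ↦ by rw [div_pow, sq_abs, div_pow]) (fun v ↦ ?_)).trans ?_
    · have := hS j hj
      rw [mul_add]
      constructor <;> linarith [this.1, this.2]
    · convert hC S ((π + v) / θ - i) using 4
      field_simp
      ring
    · rw [add_sub_cancel_left]
      gcongr
      have : L / (2 * π) ≤ L := div_le_self (by linarith) (by linarith [Real.pi_gt_three])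
      linarith
  calc ∑ i ∈ S, ∑ j ∈ S, vortexDecay N θ i j
      ≤ ∑ i ∈ S, (1 + ((i : ℝ) - N / 2) ^ 2)⁻¹ * (3 * L * C) := by
        simp only [vortexDecay, ← mul_sum]
        gcongr with i
        exact hcolumn i
    _ ≤ C * (3 * L * C) := by
        rw [← sum_mul]
        gcongr
        exact hC S _
    _ = 3 * C ^ 2 * L := by ring

lemma card_filter_le_natCast_mul_le (hθ : θ ∈ Set.Ioc 0 2) (hθN : θ * N ≤ 3)
    (hS : ∀ i ∈ S, 0 ≤ i) : #{i ∈ S | i ≤ (N : ℤ)} * θ ≤ 5 := by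
  have hcard : (#{i ∈ S | i ≤ (N : ℤ)} : ℝ) ≤ N - 0 + 1 :=
    card_le_of_forall_mem_Icc N.cast_nonneg fun i hi ↦ by
      rw [mem_filter] at hi
      exact ⟨by exact_mod_cast hS i hi.1, by exact_mod_cast hi.2⟩
  nlinarith [mul_le_mul_of_nonneg_right hcard hθ.1.le, hθ.2]

lemma sum_vortexDefectBound_le
    (hC : ∀ (T : Finset ℤ) (c : ℝ), ∑ j ∈ T, (1 + ((j : ℝ) - c) ^ 2)⁻¹ ≤ C)
    (hθ : θ ∈ Set.Ioc 0 2) (hL : 1 ≤ L) (hθN : θ * N ≤ 3)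
    (hScard : (#S : ℝ) ≤ 3 / 2 * (L / θ)) (hS : ∀ j ∈ S, θ * (j : ℝ) ∈ Set.Icc 0 L) :
    ∑ i ∈ S, ∑ j ∈ S, vortexDefectBound N θ i j ≤ (1815000 * C ^ 2 + 354) * L := by
  have hθ0 := hθ.1
  have hSθ : #S * θ ≤ 3 / 2 * L := by
    rw [← le_div_iff₀ hθ0, mul_div_assoc]
    exact hScard
  have hvortices := sum_vortexDecay_le hC hθ0 hL hS N
  have hleft : ∑ i ∈ S, ∑ _j ∈ S, (if i ≤ N then 2 * θ ^ 4 else 0) ≤ 60 * L := by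
    have hcols := card_filter_le_natCast_mul_le hθ hθN fun i hi ↦ by
      exact_mod_cast nonneg_of_mul_nonneg_right (hS i hi).1 hθ0
    calc ∑ i ∈ S, ∑ _j ∈ S, (if i ≤ N then 2 * θ ^ 4 else 0)
        = (#{i ∈ S | i ≤ (N : ℤ)} * θ) * (#S * θ) * (2 * θ ^ 2) := by
          simp only [sum_const, nsmul_eq_mul, ← mul_sum, ← sum_filter]
          ring
      _ ≤ 5 * (3 / 2 * L) * (2 * 2 ^ 2) := by gcongr; exact hθ.2
      _ = 60 * L := by ring
  have hkink : ∑ i ∈ S, ∑ _j ∈ S, (if i = N then 98 * θ ^ 2 else 0) ≤ 294 * L := by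
    have hcol : ∑ i ∈ S, (if i = N then 98 * θ ^ 2 else 0) ≤ 98 * θ ^ 2 := by
      rw [sum_ite_eq']
      split_ifs
      · rfl
      · positivity
    calc ∑ i ∈ S, ∑ _j ∈ S, (if i = N then 98 * θ ^ 2 else 0)
        ≤ #S * (98 * θ ^ 2) := by
          simp only [sum_const, nsmul_eq_mul, ← mul_sum]
          gcongr
      _ = 98 * (#S * θ) * θ := by ring
      _ ≤ 98 * (3 / 2 * L) * 2 := by gcongr; exact hθ.2
      _ = 294 * L := by ring
  simp only [vortexDefectBound, sum_add_distrib, ← mul_sum] at hleft hkink ⊢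
  linarith

lemma E_vortex_le (hC : ∀ (T : Finset ℤ) (c : ℝ), ∑ j ∈ T, (1 + ((j : ℝ) - c) ^ 2)⁻¹ ≤ C)
    (hε : ε ∈ Set.Ioo 0 (1 / 2)) (hθ : θ ∈ Set.Ioc 0 2) (hεθ : ε ≤ θ) (hN : 0 < N)
    (hθN : θ * N ∈ Set.Icc 1 3) :
    E ε (1 - Real.cos θ) (spinField (vortexField N θ)) ≤
      (1815000 * C ^ 2 + 354) * (ε * θ) := by
  have hε0 := hε.1
  calc E ε (1 - Real.cos θ) (spinField (vortexField N θ))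
      ≤ ε ^ 2 * ∑ i ∈ Icc 0 (Kof ε), ∑ j ∈ Icc 0 (Kof ε), vortexDefectBound N θ i j :=
        E_spinField_le (vortexDefectBound_nonneg N θ)
          (fun i hi j _ ↦ helicalDefect_vortexField_horizontal_le hθ.1 hN hθN
            (zero_le_one.trans (mem_Icc.1 hi).1) j)
          (fun i hi j _ ↦ helicalDefect_vortexField_vertical_le hθ.1 hN hθN.2 (mem_Icc.1 hi).1 j)
    _ ≤ ε ^ 2 * ((1815000 * C ^ 2 + 354) * (θ / ε)) := by
        gcongr
        exact sum_vortexDefectBound_le hC hθ ((one_le_div hε0).2 hεθ) hθN.2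
          (card_Icc_Kof_le hε hθ.1) fun j hj ↦ mul_mem_Icc_of_mem_Icc_Kof hε0 hθ.1.le hj
    _ = (1815000 * C ^ 2 + 354) * (ε * θ) := by field_simp

lemma exists_vortex :
    ∃ C > 0, ∀ ε θ : ℝ, ε ∈ Set.Ioo 0 (1 / 2) → θ ∈ Set.Ioc 0 2 → ε ≤ θ →
      ∃ u, InS0 ε u ∧ E ε (1 - Real.cos θ) u ≤ C * (ε * θ) := by
  obtain ⟨C, -, hC⟩ := exists_sum_inv_one_add_sq_le
  refine ⟨1815000 * C ^ 2 + 354, by positivity, fun ε θ hε hθ hεθ ↦ ?_⟩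
  have hθ0 := hθ.1
  have hθN : θ * ⌈θ⁻¹⌉₊ ∈ Set.Icc 1 3 := by
    have hlo := mul_le_mul_of_nonneg_left (Nat.le_ceil θ⁻¹) hθ0.le
    have hhi := mul_le_mul_of_nonneg_left (Nat.ceil_lt_add_one (inv_nonneg.2 hθ0.le)).le hθ0.le
    rw [mul_add, mul_inv_cancel₀ hθ0.ne'] at hhi
    rw [mul_inv_cancel₀ hθ0.ne'] at hlo
    exact ⟨hlo, by linarith [hθ.2]⟩
  exact ⟨_, inS0_spinField (vortexField_zero _ θ),
    E_vortex_le hC hε hθ hεθ (Nat.ceil_pos.2 (inv_pos.2 hθ0)) hθN⟩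

end VortexEnergy

section ScalingRegimes

variable {ε δ : ℝ}

lemma helixAngle_mem_Ioc (hδ : δ ∈ Set.Ioo 0 1) : helixAngle δ ∈ Set.Ioc 0 2 :=
  ⟨(Real.sqrt_pos.2 hδ.1).trans_le (sqrt_le_helixAngle ⟨hδ.1.le, by linarith [hδ.2]⟩),
    (helixAngle_le_pi_div_two hδ.2.le).trans (by linarith [Real.pi_le_four])⟩

lemma log_helixAngle_div_le (hε : 0 < ε) (hδ : δ ∈ Set.Ioo 0 1) :
    Real.log (helixAngle δ / ε) ≤ 2 + |Real.log (ε / √δ)| := by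
  have hδ0 := hδ.1
  have hθ0 := (helixAngle_mem_Ioc hδ).1
  calc Real.log (helixAngle δ / ε) ≤ Real.log (3 * (ε / √δ)⁻¹) := by
        rw [inv_div, ← mul_div_assoc]
        gcongr
        exact helixAngle_le_three_mul_sqrt ⟨hδ0.le, by linarith [hδ.2]⟩
    _ = Real.log 3 + -Real.log (ε / √δ) := by
        rw [Real.log_mul three_ne_zero (by positivity), Real.log_inv]
    _ ≤ 2 + |Real.log (ε / √δ)| := by
        gcongr
        · linarith [Real.log_le_sub_one_of_pos (zero_lt_three (α := ℝ))]
        · exact neg_le_abs _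

lemma exists_E_le_mul_log (hε : ε ∈ Set.Ioo 0 (1 / 2)) (hδ : δ ∈ Set.Ioo 0 1) :
    ∃ u, InS0 ε u ∧
      E ε δ u ≤ 2813940 * (ε * (δ * √δ) * (|Real.log (ε / √δ)| + 1)) := by
  have hε0 := hε.1
  have hδ0 := hδ.1
  have hsqrt : √δ ^ 2 = δ := Real.sq_sqrt hδ0.le
  rcases le_total (√δ) ε with hsmall | hlarge
  · obtain ⟨u, hu, hE⟩ := exists_ferromagnetic (δ := δ) hε
    refine ⟨u, hu, hE.trans ?_⟩
    calc 9 * δ ^ 2 = 9 * (√δ * (δ * √δ) * (0 + 1)) := by linear_combination (-9 * δ) * hsqrt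
      _ ≤ 2813940 * (ε * (δ * √δ) * (|Real.log (ε / √δ)| + 1)) := by
          gcongr
          · norm_num
          · positivity
  · have hδ' : δ ∈ Set.Icc 0 2 := ⟨hδ0.le, by linarith [hδ.2]⟩
    have hθ := helixAngle_mem_Ioc hδ
    have hθ0 := hθ.1
    have hεθ : ε ≤ helixAngle δ := hlarge.trans (sqrt_le_helixAngle hδ')
    have hlog0 : 0 ≤ Real.log (helixAngle δ / ε) := Real.log_nonneg ((one_le_div hε0).2 hεθ)
    have hlog := log_helixAngle_div_le hε0 hδ
    obtain ⟨u, hu, hE⟩ := exists_branching hε hθ hεθ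
    rw [cos_helixAngle hδ', sub_sub_cancel] at hE
    refine ⟨u, hu, hE.trans ?_⟩
    calc 34740 * (ε * helixAngle δ ^ 3 * (Real.log (helixAngle δ / ε) + 1))
        ≤ 34740 * (ε * (3 * √δ) ^ 3 * (3 * (|Real.log (ε / √δ)| + 1))) := by
          gcongr
          · exact helixAngle_le_three_mul_sqrt hδ'
          · linarith [abs_nonneg (Real.log (ε / √δ))]
      _ = 2813940 * (ε * (δ * √δ) * (|Real.log (ε / √δ)| + 1)) := by
          linear_combination
            2813940 * ε * √δ * (|Real.log (ε / √δ)| + 1) * hsqrt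

lemma exists_E_le_mul_sqrt :
    ∃ C > 0, ∀ ε δ : ℝ, ε ∈ Set.Ioo 0 (1 / 2) → δ ∈ Set.Ioo 0 1 →
      ∃ u, InS0 ε u ∧ E ε δ u ≤ C * (ε * √δ) := by
  obtain ⟨C, hC0, hC⟩ := exists_vortex
  refine ⟨9 + 3 * C, by positivity, fun ε δ hε hδ ↦ ?_⟩
  have hε0 := hε.1
  have hδ0 := hδ.1
  have hδ' : δ ∈ Set.Icc 0 2 := ⟨hδ0.le, by linarith [hδ.2]⟩
  rcases le_total (√δ) ε with hsmall | hlarge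
  · obtain ⟨u, hu, hE⟩ := exists_ferromagnetic (δ := δ) hε
    refine ⟨u, hu, hE.trans ?_⟩
    calc 9 * δ ^ 2 ≤ 9 * δ := by
          gcongr
          exact pow_le_of_le_one hδ0.le hδ.2.le two_ne_zero
      _ = 9 * (√δ * √δ) := by rw [Real.mul_self_sqrt hδ0.le]
      _ ≤ (9 + 3 * C) * (ε * √δ) := by
          gcongr
          linarith
  · obtain ⟨u, hu, hE⟩ :=
      hC ε (helixAngle δ) hε (helixAngle_mem_Ioc hδ) (hlarge.trans (sqrt_le_helixAngle hδ'))
    rw [cos_helixAngle hδ', sub_sub_cancel] at hE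
    refine ⟨u, hu, hE.trans ?_⟩
    calc C * (ε * helixAngle δ) ≤ C * (ε * (3 * √δ)) := by
          gcongr
          exact helixAngle_le_three_mul_sqrt hδ'
      _ ≤ (9 + 3 * C) * (ε * √δ) := by
          linarith [mul_nonneg hε0.le (Real.sqrt_nonneg δ)]

end ScalingRegimes

/-- Theorem 2.2(i) / Proposition 5.1: upper bound of the scaling law. -/
theorem upper_bound_scaling :
    ∃ C : ℝ, 0 < C ∧ ∀ ε δ : ℝ, ε ∈ Set.Ioo (0 : ℝ) (1 / 2) → δ ∈ Set.Ioo (0 : ℝ) 1 →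
      ∃ u : ℤ × ℤ → ℝ × ℝ, InS0 ε u ∧ E ε δ u ≤ C * sfun ε δ := by
  obtain ⟨C, -, hvortex⟩ := exists_E_le_mul_sqrt
  refine ⟨max 9 (max 2813940 C), by positivity, fun ε δ hε hδ ↦ ?_⟩
  have hε0 := hε.1
  have hδ0 := hδ.1
  exact exists_le_max_mul_min (by positivity) (by positivity) (exists_ferromagnetic hε)
    (exists_le_max_mul_min (by positivity) (by positivity) (exists_E_le_mul_log hε hδ)
      (hvortex ε δ hε hδ))
end

section
/- There exist δ̄ ∈ (0,1) and a constant c > 0 (depending only on δ̄) such that: (a) for all ε ∈ (0,1/2) and all δ ∈ [δ̄,1), every u ∈ S₀(ε) satisfies E_{ε,δ}(u) ≥ c·ε·δ^{1/2}; and (b) for all δ ∈ (0,δ̄) and all ε ∈ [δ,1/2), every u ∈ S₀(ε) satisfies E_{ε,δ}(u) ≥ c · min{δ², ε·δ^{3/2}·(|ln(ε/δ^{1/2})| + 1)} (lower bound of the scaling law, Theorem 2.2(ii)/Proposition 5.6). -/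
open Real Finset

/-!
Writing `u = (sin φ, cos φ)` turns the energy of every lattice line into a double-well energy for
the half-angle sines `p` of the increments of `φ`: up to constants,
`∑ (δ - p_k² - p_{k+1}²)² + (p_{k+1} - p_k)²`, whose wells are `p = ±√(δ / 2)`. On a window of
height `m` the cost of a column is at least of order `n δ²`, for any `n ≤ m` with `n² δ ≤ 1`, unless
`p` keeps one sign, in which case `φ` turns by at least `m √δ / 2`. Since `φ = 0` on the left edge,
such a turn in the `i`-th column, with `i` small compared to `m`, forces one of the rows through the
ends of the window to turn much faster than the wells allow, which costs at least `m δ²`. Averaging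
over the windows of height `m ∼ i` bounds the energy of the `i`-th column from below by a multiple
of `N n δ² / i`, up to a summable share of the row energies, and summing over `i` yields the
logarithm.
-/

namespace SpinField

section NatSums

variable {f : ℕ → ℝ}

lemma sum_range_add_le (hf : ∀ k, 0 ≤ f k) {k n M : ℕ} (h : k + n ≤ M) :
    ∑ l ∈ range n, f (k + l) ≤ ∑ l ∈ range M, f l :=
  calc ∑ l ∈ range n, f (k + l)
      ≤ ∑ l ∈ range k, f l + ∑ l ∈ range n, f (k + l) :=
        le_add_of_nonneg_left (sum_nonneg fun _ _ ↦ hf _)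
    _ = ∑ l ∈ range (k + n), f l := (sum_range_add f k n).symm
    _ ≤ ∑ l ∈ range M, f l :=
        sum_le_sum_of_subset_of_nonneg (range_subset_range.2 h) fun _ _ _ ↦ hf _

lemma sum_sum_range_add_le (hf : ∀ k, 0 ≤ f k) {L w M : ℕ} (h : L + w ≤ M + 1) :
    ∑ j ∈ range L, ∑ k ∈ range w, f (j + k) ≤ w * ∑ l ∈ range M, f l := by
  rw [sum_comm]
  calc ∑ k ∈ range w, ∑ j ∈ range L, f (j + k)
      ≤ (range w).card • ∑ l ∈ range M, f l := sum_le_card_nsmul _ _ _ fun k hk ↦ by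
        simp only [add_comm _ k]
        exact sum_range_add_le hf (by have := mem_range.1 hk; omega)
    _ = w * ∑ l ∈ range M, f l := by rw [card_range, nsmul_eq_mul]

lemma sq_sub_le_mul_sum_sq_sub (f : ℕ → ℝ) (n : ℕ) :
    (f n - f 0) ^ 2 ≤ n * ∑ k ∈ range n, (f (k + 1) - f k) ^ 2 := by
  simpa only [sum_range_sub, card_range] using
    sq_sum_le_card_mul_sum_sq (s := range n) (f := fun k ↦ f (k + 1) - f k)

lemma mul_le_sub_of_forall_le_sub {r : ℝ} {n : ℕ} (h : ∀ k < n, r ≤ f (k + 1) - f k) :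
    n * r ≤ f n - f 0 := by
  simpa only [sum_range_sub, card_range, nsmul_eq_mul] using
    card_nsmul_le_sum (range n) (fun k ↦ f (k + 1) - f k) r fun k hk ↦ h k (mem_range.1 hk)

lemma forall_lt_or_forall_lt_neg {r : ℝ} {n : ℕ} (hf : ∀ k < n, r < |f k|)
    (hstep : ∀ k, k + 1 < n → |f (k + 1) - f k| ≤ 2 * r) :
    (∀ k < n, r < f k) ∨ ∀ k < n, f k < -r := by
  induction n with
  | zero => simp
  | succ n ih =>
    have hn := lt_abs.1 (hf n n.lt_succ_self)
    rcases n with _ | n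
    · simpa [lt_neg] using hn
    have hjump := abs_le.1 (hstep n (by omega))
    refine (ih (fun k hk ↦ hf k (by omega)) fun k hk ↦ hstep k (by omega)).imp
      (fun hpos k hk ↦ ?_) fun hneg k hk ↦ ?_
    · rcases Nat.lt_succ_iff_lt_or_eq.1 hk with hk | rfl
      · exact hpos k hk
      · exact hn.resolve_right fun h ↦ by linarith [hpos n n.lt_succ_self, hjump.1]
    · rcases Nat.lt_succ_iff_lt_or_eq.1 hk with hk | rfl
      · exact hneg k hk
      · exact lt_neg.1 (hn.resolve_left fun h ↦ by linarith [hneg n n.lt_succ_self, hjump.2])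

lemma sum_Icc_zero_eq_sum_range (g : ℤ → ℝ) (K : ℤ) :
    ∑ i ∈ Icc 0 K, g i = ∑ i ∈ range (K + 1).toNat, g i := by
  refine sum_nbij' Int.toNat (fun i : ℕ ↦ (i : ℤ)) (fun i hi ↦ ?_) (fun i hi ↦ ?_)
    (fun i hi ↦ ?_) (fun i _ ↦ Int.toNat_natCast i) fun i hi ↦ ?_
  · rw [mem_Icc] at hi; rw [mem_range]; omega
  · rw [mem_range] at hi; rw [mem_Icc]; omega
  · exact Int.toNat_of_nonneg (mem_Icc.1 hi).1
  · rw [Int.toNat_of_nonneg (mem_Icc.1 hi).1]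

lemma log_div_le_sum_Ico_inv {D M : ℕ} (hD : 1 ≤ D) (hDM : D ≤ M) :
    log (M / D) ≤ ∑ k ∈ Ico D M, (k : ℝ)⁻¹ := by
  have hD0 : (0 : ℝ) < D := by exact_mod_cast hD
  have hDM' : (D : ℝ) ≤ M := by exact_mod_cast hDM
  have hanti : AntitoneOn (fun x : ℝ ↦ x⁻¹) (Set.Icc D M) := fun x hx y _ hxy ↦
    inv_anti₀ (hD0.trans_le hx.1) hxy
  have hzero : (0 : ℝ) ∉ Set.uIcc (D : ℝ) M := fun h ↦ by
    rw [Set.uIcc_of_le hDM'] at h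
    exact hD0.not_ge h.1
  rw [← integral_inv hzero]
  exact hanti.integral_le_sum_Ico hDM

lemma sum_Ico_inv_sq_le {D : ℕ} (hD : 1 ≤ D) (M : ℕ) :
    ∑ k ∈ Ico D M, ((k : ℝ) ^ 2)⁻¹ ≤ 2 / D := by
  obtain ⟨d, rfl⟩ := Nat.exists_eq_add_of_le' hD
  rw [← Order.succ_eq_add_one, Ico_succ_left_eq_Ioo]
  exact_mod_cast sum_Ioo_inv_sq_le (α := ℝ) d M

end NatSums

/-- The energy density of two consecutive angle increments `a`, `b`, in terms of `p = sin (a / 2)`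
and `q = sin (b / 2)`: a double well for `p` plus a penalty on its variation. -/
def wellDensity (δ p q : ℝ) : ℝ := 4 * (δ - p ^ 2 - q ^ 2) ^ 2 + (q - p) ^ 2

/-- The double-well energy of the first `n` bonds of a discrete profile `p`. -/
def wellEnergy (δ : ℝ) (p : ℕ → ℝ) (n : ℕ) : ℝ :=
  ∑ k ∈ range n, wellDensity δ (p k) (p (k + 1))

/-- The sines of half the increments of a sequence of angles. -/
noncomputable def halfSin (φ : ℕ → ℝ) (k : ℕ) : ℝ := sin ((φ (k + 1) - φ k) / 2)

section Chain

variable {δ : ℝ} {p φ : ℕ → ℝ} {m n : ℕ}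

lemma wellDensity_nonneg (δ p q : ℝ) : 0 ≤ wellDensity δ p q := by
  unfold wellDensity
  positivity

lemma sq_sub_le_wellDensity (δ p q : ℝ) : (q - p) ^ 2 ≤ wellDensity δ p q :=
  le_add_of_nonneg_left (by positivity)

lemma sq_le_wellDensity {p q : ℝ} (hδ : 0 ≤ δ) (hp : p ^ 2 ≤ δ / 4) (hq : q ^ 2 ≤ δ / 4) :
    δ ^ 2 ≤ wellDensity δ p q :=
  calc δ ^ 2 = 4 * (δ / 2) ^ 2 := by ring
    _ ≤ 4 * (δ - p ^ 2 - q ^ 2) ^ 2 := by gcongr; linarith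
    _ ≤ wellDensity δ p q := le_add_of_nonneg_right (sq_nonneg _)

lemma mul_sq_le_add_wellDensity {p : ℝ} (hδ : 0 ≤ δ) (q : ℝ) :
    δ * (16 * p ^ 2) ≤ 32 * δ ^ 2 + wellDensity δ p q := by
  unfold wellDensity
  nlinarith [sq_nonneg (p ^ 2 + q ^ 2 - 3 * δ), sq_nonneg (q - p), mul_nonneg hδ (sq_nonneg q)]

lemma wellEnergy_nonneg (δ : ℝ) (p : ℕ → ℝ) (n : ℕ) : 0 ≤ wellEnergy δ p n :=
  sum_nonneg fun _ _ ↦ wellDensity_nonneg _ _ _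

lemma wellEnergy_shift_le {k M : ℕ} (h : k + n ≤ M) :
    wellEnergy δ (fun l ↦ p (k + l)) n ≤ wellEnergy δ p M :=
  sum_range_add_le (f := fun l ↦ wellDensity δ (p l) (p (l + 1)))
    (fun _ ↦ wellDensity_nonneg _ _ _) h

lemma wellEnergy_mono (h : m ≤ n) : wellEnergy δ p m ≤ wellEnergy δ p n :=
  sum_le_sum_of_subset_of_nonneg (range_subset_range.2 h) fun _ _ _ ↦ wellDensity_nonneg _ _ _

lemma wellDensity_le_wellEnergy {k : ℕ} (h : k < n) :
    wellDensity δ (p k) (p (k + 1)) ≤ wellEnergy δ p n :=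
  single_le_sum (f := fun k ↦ wellDensity δ (p k) (p (k + 1)))
    (fun _ _ ↦ wellDensity_nonneg _ _ _) (mem_range.2 h)

lemma sq_sub_le_mul_wellEnergy (δ : ℝ) (p : ℕ → ℝ) (n : ℕ) :
    (p n - p 0) ^ 2 ≤ n * wellEnergy δ p n :=
  (sq_sub_le_mul_sum_sq_sub p n).trans <| by
    unfold wellEnergy
    gcongr
    exact sq_sub_le_wellDensity _ _ _

-- Either the profile stays far below the wells, or it has to climb to height `√δ / 2`.
lemma le_wellEnergy_of_sq_le (hδ : 0 ≤ δ) (hn : (n : ℝ) ^ 2 * δ ≤ 1) (h0 : p 0 ^ 2 ≤ δ / 16) :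
    n * δ ^ 2 / 16 ≤ wellEnergy δ p n := by
  rcases n.eq_zero_or_pos with rfl | hpos
  · simp [wellEnergy]
  by_cases hsmall : ∀ k ≤ n, p k ^ 2 ≤ δ / 4
  · calc n * δ ^ 2 / 16 ≤ (range n).card • δ ^ 2 := by
          rw [card_range, nsmul_eq_mul]
          exact div_le_self (by positivity) (by norm_num)
      _ ≤ wellEnergy δ p n := card_nsmul_le_sum _ _ _ fun k hk ↦
          have hk := mem_range.1 hk
          sq_le_wellDensity hδ (hsmall k hk.le) (hsmall (k + 1) hk)
  · push Not at hsmall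
    obtain ⟨k, hk, hpk⟩ := hsmall
    have hclimb : δ / 16 ≤ n * wellEnergy δ p n :=
      calc δ / 16 ≤ (p k - p 0) ^ 2 := by nlinarith [sq_nonneg (p k - 2 * p 0)]
        _ ≤ k * wellEnergy δ p k := sq_sub_le_mul_wellEnergy δ p k
        _ ≤ n * wellEnergy δ p n := by
          gcongr
          exacts [wellEnergy_nonneg _ _ _, wellEnergy_mono hk]
    refine le_of_mul_le_mul_left (le_trans ?_ hclimb) (Nat.cast_pos.2 hpos)
    nlinarith

lemma forall_lt_or_forall_lt_neg_of_wellEnergy_lt (hδ : 0 ≤ δ) (hnm : n ≤ m)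
    (hn : (n : ℝ) ^ 2 * δ ≤ 1) (hE : wellEnergy δ p (2 * m) < n * δ ^ 2 / 16) :
    (∀ k < m, √δ / 4 < p k) ∨ ∀ k < m, p k < -(√δ / 4) := by
  have hsq := sq_sqrt hδ
  refine forall_lt_or_forall_lt_neg (fun k hk ↦ ?_) fun k hk ↦ ?_
  · by_contra! hpk
    have hpk' : p k ^ 2 ≤ δ / 16 := by
      have := sq_le_sq' (neg_le_of_abs_le hpk) (le_of_abs_le hpk)
      linarith
    have hshift := le_wellEnergy_of_sq_le (p := fun l ↦ p (k + l)) hδ hn hpk'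
    exact hE.not_ge (hshift.trans (wellEnergy_shift_le (by omega)))
  · have hnδ : n * δ ≤ 1 := le_trans (by
      gcongr
      exact_mod_cast Nat.le_self_pow two_ne_zero n) hn
    refine abs_le_of_sq_le_sq ?_ (by positivity)
    calc (p (k + 1) - p k) ^ 2 ≤ wellEnergy δ p (2 * m) :=
          (sq_sub_le_wellDensity δ _ _).trans (wellDensity_le_wellEnergy (by omega))
      _ ≤ n * δ * δ / 16 := by linarith
      _ ≤ 1 * δ / 16 := by gcongr
      _ ≤ (2 * (√δ / 4)) ^ 2 := by linarith

lemma two_mul_le_of_lt_sin_half {a r : ℝ} (hr : 0 ≤ r) (ha : |a| ≤ π) (h : r < sin (a / 2)) :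
    2 * r ≤ a := by
  have ha0 : 0 ≤ a := by
    by_contra! hneg
    have := sin_nonpos_of_nonpos_of_neg_pi_le (x := a / 2) (by linarith)
      (by linarith [neg_le_of_abs_le ha, pi_pos])
    linarith
  linarith [sin_le (x := a / 2) (by linarith)]

lemma sq_le_mul_sq_sin_half {a : ℝ} (ha : |a| ≤ π) : a ^ 2 ≤ 16 * sin (a / 2) ^ 2 := by
  have hjordan : 2 / π * |a / 2| ≤ |sin (a / 2)| :=
    mul_abs_le_abs_sin (by rw [abs_div, abs_two]; linarith)
  have habs : |a| ≤ |4 * sin (a / 2)| :=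
    calc |a| = π * (2 / π * |a / 2|) := by rw [abs_div, abs_two]; field_simp
      _ ≤ 4 * |sin (a / 2)| := by gcongr; exact pi_le_four
      _ = |4 * sin (a / 2)| := by rw [abs_mul, abs_of_pos (four_pos (α := ℝ))]
  linarith [sq_le_sq.2 habs]

lemma halfSin_neg (φ : ℕ → ℝ) (k : ℕ) : halfSin (-φ) k = -halfSin φ k := by
  simp only [halfSin, Pi.neg_apply, ← sin_neg]
  ring_nf

lemma mul_sqrt_le_abs_sub_of_wellEnergy_lt (hδ : 0 ≤ δ) (hnm : n ≤ m)
    (hn : (n : ℝ) ^ 2 * δ ≤ 1) (hφ : ∀ k < m, |φ (k + 1) - φ k| ≤ π)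
    (hE : wellEnergy δ (halfSin φ) (2 * m) < n * δ ^ 2 / 16) :
    m * (2 * (√δ / 4)) ≤ |φ m - φ 0| := by
  rcases forall_lt_or_forall_lt_neg_of_wellEnergy_lt hδ hnm hn hE with hpos | hneg
  · refine (mul_le_sub_of_forall_le_sub fun k hk ↦ ?_).trans (le_abs_self _)
    exact two_mul_le_of_lt_sin_half (by positivity) (hφ k hk) (hpos k hk)
  · have hflip : m * (2 * (√δ / 4)) ≤ (-φ) m - (-φ) 0 := mul_le_sub_of_forall_le_sub fun k hk ↦ by
      refine two_mul_le_of_lt_sin_half (by positivity) ?_ ?_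
      · simpa only [Pi.neg_apply, neg_sub_neg, abs_sub_comm] using hφ k hk
      · exact (lt_neg.1 (hneg k hk)).trans_eq (halfSin_neg φ k).symm
    rw [Pi.neg_apply, Pi.neg_apply, neg_sub_neg, ← neg_sub] at hflip
    exact hflip.trans (neg_le_abs _)

lemma mul_sq_sub_le_add_wellEnergy (hδ : 0 ≤ δ) (hφ : ∀ k < n, |φ (k + 1) - φ k| ≤ π) :
    δ * (φ n - φ 0) ^ 2 ≤ 32 * (n : ℝ) ^ 2 * δ ^ 2 + n * wellEnergy δ (halfSin φ) n := by
  have hstep : ∀ k ∈ range n, δ * (φ (k + 1) - φ k) ^ 2 ≤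
      32 * δ ^ 2 + wellDensity δ (halfSin φ k) (halfSin φ (k + 1)) := fun k hk ↦
    (mul_le_mul_of_nonneg_left (sq_le_mul_sq_sin_half (hφ k (mem_range.1 hk))) hδ).trans
      (mul_sq_le_add_wellDensity hδ _)
  calc δ * (φ n - φ 0) ^ 2 ≤ δ * (n * ∑ k ∈ range n, (φ (k + 1) - φ k) ^ 2) := by
        gcongr; exact sq_sub_le_mul_sum_sq_sub φ n
    _ = n * ∑ k ∈ range n, δ * (φ (k + 1) - φ k) ^ 2 := by rw [← mul_sum]; ring
    _ ≤ n * ∑ k ∈ range n,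
          (32 * δ ^ 2 + wellDensity δ (halfSin φ k) (halfSin φ (k + 1))) := by
        gcongr with k hk; exact hstep k hk
    _ = 32 * (n : ℝ) ^ 2 * δ ^ 2 + n * wellEnergy δ (halfSin φ) n := by
        rw [sum_add_distrib, sum_const, card_range, nsmul_eq_mul, wellEnergy]; ring

lemma mul_sq_le_wellEnergy_of_le_abs_sub (hδ : 0 ≤ δ) (hm : 0 < m) (hnm : 32 * n ≤ m)
    (hφ : ∀ k < n, |φ (k + 1) - φ k| ≤ π) (hfar : m * (√δ / 4) ≤ |φ n - φ 0|) :
    m * δ ^ 2 ≤ wellEnergy δ (halfSin φ) n := by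
  have hnm' : 32 * (n : ℝ) ≤ m := by exact_mod_cast hnm
  have hS := wellEnergy_nonneg δ (halfSin φ) n
  have hfar_sq : (m : ℝ) ^ 2 * δ / 16 ≤ (φ n - φ 0) ^ 2 :=
    calc (m : ℝ) ^ 2 * δ / 16 = (m * (√δ / 4)) ^ 2 := by rw [mul_pow, div_pow, sq_sqrt hδ]; ring
      _ ≤ |φ n - φ 0| ^ 2 := by gcongr
      _ = (φ n - φ 0) ^ 2 := sq_abs _
  refine le_of_mul_le_mul_left ?_ (Nat.cast_pos.2 hm : (0 : ℝ) < m)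
  have hwell : 32 * (32 * (n : ℝ) ^ 2 * δ ^ 2) ≤ (m : ℝ) ^ 2 * δ ^ 2 :=
    calc 32 * (32 * (n : ℝ) ^ 2 * δ ^ 2) = (32 * (n : ℝ)) ^ 2 * δ ^ 2 := by ring
      _ ≤ (m : ℝ) ^ 2 * δ ^ 2 := by gcongr
  have hchain : 32 * (n * wellEnergy δ (halfSin φ) n) ≤ m * wellEnergy δ (halfSin φ) n := by
    rw [← mul_assoc]
    gcongr
  linarith [mul_sq_sub_le_add_wellEnergy hδ hφ, mul_le_mul_of_nonneg_left hfar_sq hδ]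

end Chain

/-- A lattice of angles on `{0, …, N}²` that vanishes on the left edge and whose increments along
horizontal and vertical bonds are at most `r`: the lift of a spin field satisfying the boundary
condition. -/
structure IsAnchoredAngle (N : ℕ) (r : ℝ) (φ : ℕ → ℕ → ℝ) : Prop where
  left : ∀ j ≤ N, φ 0 j = 0
  horizontal : ∀ i < N, ∀ j ≤ N, |φ (i + 1) j - φ i j| ≤ r
  vertical : ∀ i ≤ N, ∀ j < N, |φ i (j + 1) - φ i j| ≤ r

/-- The double-well energy of the `i`-th column of a lattice of angles on `{0, …, N}²`. The energy
of the `j`-th row is `columnEnergy δ N (flip φ) j`. -/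
noncomputable def columnEnergy (δ : ℝ) (N : ℕ) (φ : ℕ → ℕ → ℝ) (i : ℕ) : ℝ :=
  wellEnergy δ (halfSin (φ i)) (N - 1)

/-- The double-well energy of all vertical bonds of a lattice of angles on `{0, …, N}²`; applied to
`flip φ`, that of all horizontal bonds. -/
noncomputable def verticalEnergy (δ : ℝ) (N : ℕ) (φ : ℕ → ℕ → ℝ) : ℝ :=
  ∑ i ∈ range (N + 1), columnEnergy δ N φ i

section Lattice

variable {δ : ℝ} {φ : ℕ → ℕ → ℝ} {N i j m n : ℕ}

lemma IsAnchoredAngle.mono {r r' : ℝ} (h : IsAnchoredAngle N r φ) (hr : r ≤ r') :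
    IsAnchoredAngle N r' φ where
  left := h.left
  horizontal i hi j hj := (h.horizontal i hi j hj).trans hr
  vertical i hi j hj := (h.vertical i hi j hj).trans hr

lemma columnEnergy_nonneg (δ : ℝ) (N : ℕ) (φ : ℕ → ℕ → ℝ) (i : ℕ) : 0 ≤ columnEnergy δ N φ i :=
  wellEnergy_nonneg _ _ _

lemma verticalEnergy_nonneg (δ : ℝ) (N : ℕ) (φ : ℕ → ℕ → ℝ) : 0 ≤ verticalEnergy δ N φ :=
  sum_nonneg fun _ _ ↦ columnEnergy_nonneg _ _ _ _

-- If the `i`-th column is cheap between heights `j` and `j + m`, the angle turns by at least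
-- `m * √δ / 2` there, so it is far from `0` at one of the two ends; the row through that end
-- then has to turn too much between the left edge and the `i`-th column.
lemma IsAnchoredAngle.mul_le_column_add_row (h : IsAnchoredAngle N π φ) (hδ : 0 ≤ δ)
    (hm : 0 < m) (him : 32 * i ≤ m) (hnm : n ≤ m) (hn : (n : ℝ) ^ 2 * δ ≤ 1)
    (hj : j + 2 * m ≤ N) :
    n * m * δ ^ 2 / 16 ≤ m * wellEnergy δ (fun k ↦ halfSin (φ i) (j + k)) (2 * m) +
      n * (columnEnergy δ N (flip φ) j + columnEnergy δ N (flip φ) (j + m)) := by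
  have hrow : ∀ l ≤ N, m * (√δ / 4) ≤ |φ i l| → m * δ ^ 2 ≤ columnEnergy δ N (flip φ) l :=
    fun l hl hfar ↦ by
      refine (mul_sq_le_wellEnergy_of_le_abs_sub (φ := flip φ l) hδ hm him
        (fun k hk ↦ h.horizontal k (by omega) l hl) ?_).trans (wellEnergy_mono (by omega))
      simpa only [flip, h.left l hl, sub_zero] using hfar
  have hc := wellEnergy_nonneg δ (fun k ↦ halfSin (φ i) (j + k)) (2 * m)
  have hr := columnEnergy_nonneg δ N (flip φ)
  by_cases hcheap : wellEnergy δ (fun k ↦ halfSin (φ i) (j + k)) (2 * m) < n * δ ^ 2 / 16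
  · have hturn : m * (2 * (√δ / 4)) ≤ |φ i (j + m) - φ i j| :=
      mul_sqrt_le_abs_sub_of_wellEnergy_lt (φ := fun k ↦ φ i (j + k)) hδ hnm hn
        (fun k hk ↦ h.vertical i (by omega) (j + k) (by omega)) hcheap
    have hmδ : m * δ ^ 2 ≤ columnEnergy δ N (flip φ) j + columnEnergy δ N (flip φ) (j + m) := by
      rcases le_total (m * (√δ / 4)) |φ i j| with hfar | hnear
      · linarith [hrow j (by omega) hfar, hr (j + m)]
      · linarith [hrow (j + m) (by omega) (by linarith [abs_sub (φ i (j + m)) (φ i j)]), hr j]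
    calc n * m * δ ^ 2 / 16 ≤ n * (m * δ ^ 2) := by
          rw [← mul_assoc]
          exact div_le_self (by positivity) (by norm_num)
      _ ≤ n * (columnEnergy δ N (flip φ) j + columnEnergy δ N (flip φ) (j + m)) := by gcongr
      _ ≤ _ := le_add_of_nonneg_left (by positivity)
  · calc n * m * δ ^ 2 / 16 = m * (n * δ ^ 2 / 16) := by ring
      _ ≤ m * wellEnergy δ (fun k ↦ halfSin (φ i) (j + k)) (2 * m) := by
          gcongr; exact not_lt.1 hcheap
      _ ≤ _ := le_add_of_nonneg_right (mul_nonneg n.cast_nonneg (add_nonneg (hr _) (hr _)))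

lemma sum_range_wellEnergy_shift_le (hm : 0 < m) (hmN : 2 * m ≤ N) (p : ℕ → ℝ) :
    ∑ j ∈ range (N - 2 * m), wellEnergy δ (fun k ↦ p (j + k)) (2 * m) ≤
      2 * m * wellEnergy δ p (N - 1) := by
  have := sum_sum_range_add_le (f := fun k ↦ wellDensity δ (p k) (p (k + 1)))
    (fun _ ↦ wellDensity_nonneg _ _ _) (L := N - 2 * m) (w := 2 * m) (M := N - 1) (by omega)
  exact_mod_cast this

lemma IsAnchoredAngle.mul_le_column_add_rows (h : IsAnchoredAngle N π φ) (hδ : 0 ≤ δ)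
    (hm : 0 < m) (him : 32 * i ≤ m) (hmN : 4 * m ≤ N) (hnm : n ≤ m)
    (hn : (n : ℝ) ^ 2 * δ ≤ 1) :
    N * n * m * δ ^ 2 / 32 ≤
      2 * m ^ 2 * columnEnergy δ N φ i + 2 * n * verticalEnergy δ N (flip φ) := by
  set L := N - 2 * m
  have hLN : (N : ℝ) ≤ 2 * L := by exact_mod_cast (by omega : N ≤ 2 * L)
  have hr := columnEnergy_nonneg δ N (flip φ)
  have hlower : ∑ j ∈ range L, columnEnergy δ N (flip φ) j ≤ verticalEnergy δ N (flip φ) := by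
    unfold verticalEnergy
    simpa only [zero_add] using sum_range_add_le hr (k := 0) (by omega : 0 + L ≤ N + 1)
  have hupper : ∑ j ∈ range L, columnEnergy δ N (flip φ) (j + m) ≤
      verticalEnergy δ N (flip φ) := by
    unfold verticalEnergy
    simpa only [add_comm _ m] using sum_range_add_le hr (by omega : m + L ≤ N + 1)
  calc N * n * m * δ ^ 2 / 32 ≤ 2 * L * n * m * δ ^ 2 / 32 := by gcongr
    _ = (range L).card • (n * m * δ ^ 2 / 16) := by rw [card_range, nsmul_eq_mul]; ring
    _ ≤ ∑ j ∈ range L, (m * wellEnergy δ (fun k ↦ halfSin (φ i) (j + k)) (2 * m) +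
          n * (columnEnergy δ N (flip φ) j + columnEnergy δ N (flip φ) (j + m))) :=
        card_nsmul_le_sum _ _ _ fun j hj ↦
          h.mul_le_column_add_row hδ hm him hnm hn (by have := mem_range.1 hj; omega)
    _ = m * ∑ j ∈ range L, wellEnergy δ (fun k ↦ halfSin (φ i) (j + k)) (2 * m) +
          n * (∑ j ∈ range L, columnEnergy δ N (flip φ) j +
            ∑ j ∈ range L, columnEnergy δ N (flip φ) (j + m)) := by
        rw [sum_add_distrib, ← mul_sum, ← mul_sum, sum_add_distrib]
    _ ≤ m * (2 * m * columnEnergy δ N φ i) +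
          n * (verticalEnergy δ N (flip φ) + verticalEnergy δ N (flip φ)) := by
        gcongr
        exact sum_range_wellEnergy_shift_le hm (by omega) _
    _ = _ := by ring

-- At horizontal distance `k` from the left edge the optimal window height is comparable to `k`;
-- summing over `k` gives the logarithm.
lemma IsAnchoredAngle.mul_log_div_le (h : IsAnchoredAngle N π φ) (hδ : 0 ≤ δ) {D M : ℕ}
    (hD : 1 ≤ D) (hDM : D ≤ M) (hMN : 128 * M ≤ N) (hDδ : (D : ℝ) ^ 2 * δ ≤ 1) :
    N * D * δ ^ 2 / 2048 * log (M / D) ≤ verticalEnergy δ N φ + verticalEnergy δ N (flip φ) := by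
  set R := verticalEnergy δ N (flip φ)
  have : (0 : ℝ) < D := Nat.cast_pos.2 hD
  have hcolumn : ∀ k ∈ Ico D M, N * D * δ ^ 2 / 2048 * (k : ℝ)⁻¹ ≤
      columnEnergy δ N φ k + D * R / 1024 * ((k : ℝ) ^ 2)⁻¹ := fun k hk ↦ by
    have ⟨hDk, hkM⟩ := mem_Ico.1 hk
    have hk0 : (0 : ℝ) < k := Nat.cast_pos.2 (hD.trans hDk)
    have := h.mul_le_column_add_rows hδ (i := k) (m := 32 * k) (n := D) (by omega) le_rfl
      (by omega) (by omega) hDδ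
    push_cast at this
    refine le_of_mul_le_mul_left ?_ (by positivity : 0 < 2048 * (k : ℝ) ^ 2)
    field_simp
    linarith
  have hV : ∑ k ∈ Ico D M, columnEnergy δ N φ k ≤ verticalEnergy δ N φ :=
    sum_le_sum_of_subset_of_nonneg (fun k hk ↦ by simp only [mem_Ico, mem_range] at *; omega)
      fun _ _ _ ↦ columnEnergy_nonneg _ _ _ _
  calc N * D * δ ^ 2 / 2048 * log (M / D)
      ≤ N * D * δ ^ 2 / 2048 * ∑ k ∈ Ico D M, (k : ℝ)⁻¹ := by
        gcongr; exact log_div_le_sum_Ico_inv hD hDM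
    _ ≤ ∑ k ∈ Ico D M, (columnEnergy δ N φ k + D * R / 1024 * ((k : ℝ) ^ 2)⁻¹) := by
        rw [mul_sum]; exact sum_le_sum hcolumn
    _ = ∑ k ∈ Ico D M, columnEnergy δ N φ k + D * R / 1024 * ∑ k ∈ Ico D M, ((k : ℝ) ^ 2)⁻¹ := by
        rw [sum_add_distrib, ← mul_sum]
    _ ≤ verticalEnergy δ N φ + D * R / 1024 * (2 / D) := by
        have := verticalEnergy_nonneg δ N (flip φ)
        gcongr
        exact sum_Ico_inv_sq_le hD M
    _ = verticalEnergy δ N φ + R / 512 := by field_simp; ring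
    _ ≤ verticalEnergy δ N φ + R := by
        gcongr; exact div_le_self (verticalEnergy_nonneg _ _ _) (by norm_num)

end Lattice

section Angles

variable {δ a b d : ℝ}

/-- The energy of three consecutive spins as a function of the two angle increments `a`, `b`. -/
noncomputable def angleEnergy (δ a b : ℝ) : ℝ :=
  (cos a + cos b - 2 + 2 * δ) ^ 2 + (sin b - sin a) ^ 2

lemma angleEnergy_nonneg (δ a b : ℝ) : 0 ≤ angleEnergy δ a b := by
  unfold angleEnergy
  positivity

lemma sqnorm_nonneg (v : ℝ × ℝ) : 0 ≤ sqnorm v := by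
  unfold sqnorm
  positivity

lemma sqnorm_sub_smul_add_eq_angleEnergy (δ x y z : ℝ) :
    sqnorm ((sin x, cos x) - (2 * (1 - δ)) • (sin y, cos y) + (sin z, cos z)) =
      angleEnergy δ (y - x) (z - y) := by
  obtain ⟨a, rfl⟩ : ∃ a, x = y - a := ⟨y - x, (sub_sub_cancel _ _).symm⟩
  obtain ⟨b, rfl⟩ : ∃ b, z = y + b := ⟨z - y, (add_sub_cancel _ _).symm⟩
  simp only [sqnorm, angleEnergy, sub_sub_cancel, add_sub_cancel_left, Prod.fst_add, Prod.fst_sub,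
    Prod.smul_fst, Prod.snd_add, Prod.snd_sub, Prod.smul_snd, smul_eq_mul, sin_sub, cos_sub,
    sin_add, cos_add]
  linear_combination ((cos a + cos b - 2 + 2 * δ) ^ 2 + (sin b - sin a) ^ 2) * sin_sq_add_cos_sq y

lemma sq_sin_half_sub_sin_half_le (ha : |a| ≤ 1 / 2) (hb : |b| ≤ 1 / 2) :
    (sin (b / 2) - sin (a / 2)) ^ 2 ≤ (sin b - sin a) ^ 2 := by
  have ⟨ha1, ha2⟩ := abs_le.1 ha
  have ⟨hb1, hb2⟩ := abs_le.1 hb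
  set t := sin ((b - a) / 4) with ht
  have hfull : sin b - sin a = 4 * t * (cos ((b - a) / 4) * cos ((b + a) / 2)) := by
    rw [sin_sub_sin, show (b - a) / 2 = 2 * ((b - a) / 4) by ring, sin_two_mul]
    ring
  have hhalf : sin (b / 2) - sin (a / 2) = 2 * t * cos ((b + a) / 4) := by
    rw [sin_sub_sin, ht]
    ring_nf
  have h1 : 3 / 4 ≤ cos ((b - a) / 4) := by
    nlinarith [one_sub_sq_div_two_le_cos (x := (b - a) / 4)]
  have h2 : 3 / 4 ≤ cos ((b + a) / 2) := by
    nlinarith [one_sub_sq_div_two_le_cos (x := (b + a) / 2)]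
  have hcos : 1 / 2 ≤ cos ((b - a) / 4) * cos ((b + a) / 2) := by nlinarith
  calc (sin (b / 2) - sin (a / 2)) ^ 2 = (2 * t) ^ 2 * cos ((b + a) / 4) ^ 2 := by
        rw [hhalf, mul_pow]
    _ ≤ (2 * t) ^ 2 * 1 := by gcongr; exact cos_sq_le_one _
    _ = (4 * t) ^ 2 * (1 / 2) ^ 2 := by ring
    _ ≤ (4 * t) ^ 2 * (cos ((b - a) / 4) * cos ((b + a) / 2)) ^ 2 := by gcongr
    _ = (sin b - sin a) ^ 2 := by rw [hfull, mul_pow _ (_ * _)]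

lemma wellDensity_sin_half_le_angleEnergy (δ : ℝ) (ha : |a| ≤ 1 / 2) (hb : |b| ≤ 1 / 2) :
    wellDensity δ (sin (a / 2)) (sin (b / 2)) ≤ angleEnergy δ a b := by
  have hcos : ∀ x, cos x = 1 - 2 * sin (x / 2) ^ 2 := fun x ↦ by
    rw [← cos_two_mul_eq_one_sub, mul_div_cancel₀ _ two_ne_zero]
  have hwell : 4 * (δ - sin (a / 2) ^ 2 - sin (b / 2) ^ 2) ^ 2 =
      (cos a + cos b - 2 + 2 * δ) ^ 2 := by
    rw [hcos a, hcos b]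
    ring
  unfold wellDensity angleEnergy
  rw [hwell]
  exact add_le_add_right (sq_sin_half_sub_sin_half_le ha hb) _

lemma le_cos_of_angleEnergy_lt (hδ : δ < 1 / 100) (h : angleEnergy δ a b < 1 / 10000) :
    97 / 100 ≤ cos a ∧ 97 / 100 ≤ cos b := by
  have hsq : (cos a + cos b - 2 + 2 * δ) ^ 2 ≤ (1 / 100) ^ 2 := by
    unfold angleEnergy at h
    linarith [sq_nonneg (sin b - sin a)]
  have hlow := neg_le_of_abs_le (abs_le_of_sq_le_sq hsq (by norm_num))
  constructor <;> linarith [cos_le_one a, cos_le_one b]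

lemma abs_le_half_of_le_cos (hd : |d| ≤ π) (hcos : 97 / 100 ≤ cos d) : |d| ≤ 1 / 2 := by
  have hquad := cos_le_one_sub_mul_cos_sq hd
  have hpi : π ^ 2 ≤ 16 := by nlinarith [pi_pos, pi_le_four]
  have hd2 : 2 * d ^ 2 ≤ 3 / 100 * π ^ 2 := by
    have : 2 / π ^ 2 * d ^ 2 ≤ 3 / 100 := by linarith
    rwa [div_mul_eq_mul_div, div_le_iff₀ (by positivity)] at this
  exact abs_le_of_sq_le_sq (by linarith) (by norm_num)

end Angles

section Lift

/-- The continuous-angle lift of a sequence of unit complex numbers starting at `1`: the sum of the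
principal arguments of the successive quotients, so that increments lie in `(-π, π]`. -/
noncomputable def liftAngle (z : ℕ → ℂ) (k : ℕ) : ℝ :=
  ∑ l ∈ range k, (z (l + 1) / z l).arg

lemma liftAngle_zero (z : ℕ → ℂ) : liftAngle z 0 = 0 := sum_range_zero _

lemma abs_liftAngle_succ_sub_le (z : ℕ → ℂ) (k : ℕ) :
    |liftAngle z (k + 1) - liftAngle z k| ≤ π := by
  rw [liftAngle, sum_range_succ, liftAngle, add_sub_cancel_left]
  exact Complex.abs_arg_le_pi _

lemma exp_liftAngle_mul_I {z : ℕ → ℂ} {n : ℕ} (h0 : z 0 = 1) (hz : ∀ k ≤ n, ‖z k‖ = 1) :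
    Complex.exp (liftAngle z n * Complex.I) = z n := by
  induction n with
  | zero => rw [liftAngle_zero, Complex.ofReal_zero, zero_mul, Complex.exp_zero, h0]
  | succ n ih =>
    have hn := hz n n.le_succ
    have hquot : ‖z (n + 1) / z n‖ = 1 := by rw [norm_div, hn, hz _ le_rfl, div_one]
    have hstep := Complex.norm_mul_exp_arg_mul_I (z (n + 1) / z n)
    rw [hquot, Complex.ofReal_one, one_mul] at hstep
    rw [liftAngle, sum_range_succ, ← liftAngle, Complex.ofReal_add, add_mul, Complex.exp_add,
      ih fun k hk ↦ hz k (hk.trans n.le_succ), hstep,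
      mul_div_cancel₀ _ (norm_ne_zero_iff.1 (hn ▸ one_ne_zero))]

/-- The lattice of angles `φ` represents the spin field `u` on `{0, …, N}²`; angles are measured
from the boundary value `(0, 1)`. -/
def IsLift (N : ℕ) (u : ℤ × ℤ → ℝ × ℝ) (φ : ℕ → ℕ → ℝ) : Prop :=
  ∀ i ≤ N, ∀ j ≤ N, u (i, j) = (sin (φ i j), cos (φ i j))

variable {ε δ : ℝ} {u : ℤ × ℤ → ℝ × ℝ} {φ : ℕ → ℕ → ℝ} {N : ℕ}

lemma Ehor_eq_Ever_swap (ε δ : ℝ) (u : ℤ × ℤ → ℝ × ℝ) : Ehor ε δ u = Ever ε δ (u ∘ Prod.swap) := by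
  unfold Ehor Ever IdxH IdxV
  rw [sum_product_right, sum_product]
  rfl

lemma IsLift.flip (h : IsLift N u φ) : IsLift N (u ∘ Prod.swap) (flip φ) :=
  fun i hi j hj ↦ h j hj i hi

lemma Ever_nonneg (ε δ : ℝ) (u : ℤ × ℤ → ℝ × ℝ) : 0 ≤ Ever ε δ u :=
  mul_nonneg (by positivity) (sum_nonneg fun _ _ ↦ sqnorm_nonneg _)

lemma Ehor_nonneg (ε δ : ℝ) (u : ℤ × ℤ → ℝ × ℝ) : 0 ≤ Ehor ε δ u :=
  Ehor_eq_Ever_swap ε δ u ▸ Ever_nonneg _ _ _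

lemma E_nonneg (ε δ : ℝ) (u : ℤ × ℤ → ℝ × ℝ) : 0 ≤ E ε δ u :=
  add_nonneg (Ehor_nonneg _ _ _) (Ever_nonneg _ _ _)

lemma Ever_eq_sum_range (hN : Kof ε = N) (δ : ℝ) (u : ℤ × ℤ → ℝ × ℝ) :
    Ever ε δ u = ε ^ 2 / 2 * ∑ i ∈ range (N + 1), ∑ j ∈ range (N - 1),
      sqnorm (u (i, j) - (2 * (1 - δ)) • u (i, (j + 1 : ℕ)) + u (i, (j + 2 : ℕ))) := by
  have hrows : ((N : ℤ) - 2 + 1).toNat = N - 1 := by omega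
  have hcols : ((N : ℤ) + 1).toNat = N + 1 := by omega
  unfold Ever IdxV
  rw [sum_product, hN, sum_Icc_zero_eq_sum_range, hcols]
  simp only [sum_Icc_zero_eq_sum_range, hrows, Nat.cast_add, Nat.cast_one, Nat.cast_ofNat]

lemma IsLift.Ever_eq_sum_angleEnergy (h : IsLift N u φ) (hN : Kof ε = N) (δ : ℝ) :
    Ever ε δ u = ε ^ 2 / 2 * ∑ i ∈ range (N + 1), ∑ j ∈ range (N - 1),
      angleEnergy δ (φ i (j + 1) - φ i j) (φ i (j + 2) - φ i (j + 1)) := by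
  rw [Ever_eq_sum_range hN]
  refine congrArg _ (sum_congr rfl fun i hi ↦ sum_congr rfl fun j hj ↦ ?_)
  rw [mem_range] at hi hj
  rw [h i (by omega) j (by omega), h i (by omega) (j + 1) (by omega),
    h i (by omega) (j + 2) (by omega), sqnorm_sub_smul_add_eq_angleEnergy]

lemma IsLift.mul_angleEnergy_le_Ever (h : IsLift N u φ) (hN : Kof ε = N) (δ : ℝ) {i j : ℕ}
    (hi : i ≤ N) (hj : j + 2 ≤ N) :
    ε ^ 2 / 2 * angleEnergy δ (φ i (j + 1) - φ i j) (φ i (j + 2) - φ i (j + 1)) ≤ Ever ε δ u := by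
  rw [h.Ever_eq_sum_angleEnergy hN δ]
  gcongr
  let e : ℕ → ℕ → ℝ := fun i j ↦ angleEnergy δ (φ i (j + 1) - φ i j) (φ i (j + 2) - φ i (j + 1))
  have he : ∀ i j, 0 ≤ e i j := fun _ _ ↦ angleEnergy_nonneg _ _ _
  calc e i j ≤ ∑ j ∈ range (N - 1), e i j :=
        single_le_sum (f := e i) (fun _ _ ↦ he _ _) (mem_range.2 (by omega))
    _ ≤ ∑ i ∈ range (N + 1), ∑ j ∈ range (N - 1), e i j :=
        single_le_sum (f := fun i ↦ ∑ j ∈ range (N - 1), e i j)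
          (fun _ _ ↦ sum_nonneg fun _ _ ↦ he _ _) (mem_range.2 (by omega))

lemma IsLift.le_cos_sub (h : IsLift N u φ) (hN : Kof ε = N) (hN2 : 2 ≤ N) (hε : 0 < ε)
    (hδ : δ < 1 / 100) (hE : Ever ε δ u < ε ^ 2 / 20000) {i j : ℕ} (hi : i ≤ N) (hj : j < N) :
    97 / 100 ≤ cos (φ i (j + 1) - φ i j) := by
  have hsmall : ∀ l, l + 2 ≤ N →
      angleEnergy δ (φ i (l + 1) - φ i l) (φ i (l + 2) - φ i (l + 1)) < 1 / 10000 := fun l hl ↦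
    lt_of_mul_lt_mul_left ((h.mul_angleEnergy_le_Ever hN δ hi hl).trans_lt (by linarith))
      (by positivity : 0 ≤ ε ^ 2 / 2)
  rcases Nat.lt_or_ge (j + 1) N with hlt | hlast
  · exact (le_cos_of_angleEnergy_lt hδ (hsmall j hlt)).1
  · obtain ⟨l, rfl⟩ : ∃ l, j = l + 1 := ⟨j - 1, by omega⟩
    exact (le_cos_of_angleEnergy_lt hδ (hsmall l hj)).2

lemma IsLift.mul_verticalEnergy_le_Ever (h : IsLift N u φ) (hN : Kof ε = N) (δ : ℝ)
    (hφ : ∀ i ≤ N, ∀ j < N, |φ i (j + 1) - φ i j| ≤ 1 / 2) :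
    ε ^ 2 / 2 * verticalEnergy δ N φ ≤ Ever ε δ u := by
  rw [h.Ever_eq_sum_angleEnergy hN δ]
  unfold verticalEnergy columnEnergy wellEnergy
  gcongr with i hi j hj
  rw [mem_range] at hi hj
  exact wellDensity_sin_half_le_angleEnergy δ (hφ i (by omega) j (by omega))
    (hφ i (by omega) (j + 1) (by omega))

lemma exists_isLift_of_inS0 (hu : InS0 ε u) (hN : Kof ε = N) :
    ∃ φ, IsLift N u φ ∧ (∀ j, φ 0 j = 0) ∧ ∀ i j, |φ (i + 1) j - φ i j| ≤ π := by
  let z : ℕ → ℕ → ℂ := fun j i ↦ ⟨(u (i, j)).2, (u (i, j)).1⟩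
  refine ⟨fun i j ↦ liftAngle (z j) i, fun i hi j hj ↦ ?_, fun j ↦ liftAngle_zero _,
    fun i j ↦ abs_liftAngle_succ_sub_le _ _⟩
  have hleft : z j 0 = 1 := by
    have := hu.2 j (by rw [hN, mem_Icc]; omega)
    simp only [z, Nat.cast_zero, this]
    rfl
  have hnorm : ∀ k ≤ i, ‖z j k‖ = 1 := fun k hk ↦ by
    have hunit := hu.1 (k, j) (by rw [Idx, hN, mem_product, mem_Icc, mem_Icc]; omega)
    rw [Complex.norm_def, Real.sqrt_eq_one, Complex.normSq_mk, ← hunit, sqnorm]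
    ring
  have hexp := exp_liftAngle_mul_I hleft hnorm
  rw [Prod.ext_iff, ← Complex.exp_ofReal_mul_I_im, ← Complex.exp_ofReal_mul_I_re, hexp]
  exact ⟨rfl, rfl⟩

-- Three sides of a lattice square turn by at most `3 / 2 < π`, so the cosine determines the angle
-- along the fourth.
lemma abs_vertical_le_half (hleft : ∀ j, φ 0 j = 0)
    (hhor : ∀ i < N, ∀ j ≤ N, |φ (i + 1) j - φ i j| ≤ 1 / 2)
    (hcos : ∀ i ≤ N, ∀ j < N, 97 / 100 ≤ cos (φ i (j + 1) - φ i j)) :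
    ∀ i ≤ N, ∀ j < N, |φ i (j + 1) - φ i j| ≤ 1 / 2 := by
  intro i hi j hj
  induction i with
  | zero => rw [hleft, hleft, sub_zero, abs_zero]; norm_num
  | succ i ih =>
    refine abs_le_half_of_le_cos ?_ (hcos (i + 1) hi j hj)
    have hopp := abs_le.1 (ih (by omega))
    have hbot := abs_le.1 (hhor i hi j hj.le)
    have htop := abs_le.1 (hhor i hi (j + 1) hj)
    exact abs_le.2 ⟨by linarith [pi_gt_three], by linarith [pi_gt_three]⟩

lemma exists_isLift_isAnchoredAngle (hε : 0 < ε) (hδ : δ < 1 / 100) (hN : Kof ε = N)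
    (hN2 : 2 ≤ N) (hu : InS0 ε u) (hE : E ε δ u < ε ^ 2 / 20000) :
    ∃ φ, IsLift N u φ ∧ IsAnchoredAngle N (1 / 2) φ := by
  obtain ⟨φ, hlift, hleft, hpi⟩ := exists_isLift_of_inS0 hu hN
  have hhorE : Ever ε δ (u ∘ Prod.swap) < ε ^ 2 / 20000 := by
    rw [← Ehor_eq_Ever_swap]
    exact (le_add_of_nonneg_right (Ever_nonneg ε δ u)).trans_lt hE
  have hverE : Ever ε δ u < ε ^ 2 / 20000 :=
    (le_add_of_nonneg_left (Ehor_nonneg ε δ u)).trans_lt hE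
  have hhor : ∀ i < N, ∀ j ≤ N, |φ (i + 1) j - φ i j| ≤ 1 / 2 := fun i hi j hj ↦
    abs_le_half_of_le_cos (hpi i j) (hlift.flip.le_cos_sub hN hN2 hε hδ hhorE hj hi)
  exact ⟨φ, hlift, fun j _ ↦ hleft j, hhor, abs_vertical_le_half hleft hhor
    fun i hi j hj ↦ hlift.le_cos_sub hN hN2 hε hδ hverE hi hj⟩

lemma IsAnchoredAngle.mul_verticalEnergy_add_le_E (h : IsAnchoredAngle N (1 / 2) φ)
    (hlift : IsLift N u φ) (hN : Kof ε = N) (δ : ℝ) :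
    ε ^ 2 / 2 * (verticalEnergy δ N φ + verticalEnergy δ N (flip φ)) ≤ E ε δ u := by
  rw [mul_add, add_comm, E, Ehor_eq_Ever_swap]
  exact add_le_add
    (hlift.flip.mul_verticalEnergy_le_Ever hN δ fun j hj i hi ↦ h.horizontal i hi j hj)
    (hlift.mul_verticalEnergy_le_Ever hN δ h.vertical)

end Lift

section Scaling

variable {ε δ : ℝ} {u : ℤ × ℤ → ℝ × ℝ} {N : ℕ}

lemma exists_Kof_eq_natCast (hε : 0 < ε) (hε2 : ε < 1 / 2) :
    ∃ N : ℕ, Kof ε = N ∧ 2 ≤ N ∧ ε * N < 1 ∧ 1 ≤ ε * (N + 1) := by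
  have htwo : 2 < ⌈1 / ε⌉ := Int.lt_ceil.2 <| by
    rw [lt_div_iff₀ hε]
    push_cast
    linarith
  obtain ⟨N, hN⟩ := Int.eq_ofNat_of_zero_le (by omega : 0 ≤ ⌈1 / ε⌉ - 1)
  have hceil : (⌈1 / ε⌉ : ℝ) = N + 1 := by exact_mod_cast (by omega : ⌈1 / ε⌉ = N + 1)
  have hlt := Int.ceil_lt_add_one (1 / ε)
  have hle := Int.le_ceil (1 / ε)
  rw [hceil] at hlt hle
  refine ⟨N, hN, by omega, ?_, by rwa [div_le_iff₀' hε] at hle⟩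
  rwa [add_lt_add_iff_right, lt_div_iff₀' hε] at hlt

lemma mul_sq_le_E (hε : 0 < ε) (hε2 : ε < 1 / 2) (hu : InS0 ε u) :
    2 / 3 * ε * δ ^ 2 ≤ E ε δ u := by
  obtain ⟨N, hN, hN2, -, hεN⟩ := exists_Kof_eq_natCast hε hε2
  have hedge : ∀ j ≤ N, u (0, j) = (0, 1) := fun j hj ↦
    hu.2 j (by rw [hN, mem_Icc]; omega)
  let e : ℕ → ℕ → ℝ := fun i j ↦
    sqnorm (u (i, j) - (2 * (1 - δ)) • u (i, (j + 1 : ℕ)) + u (i, (j + 2 : ℕ)))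
  have hdensity : ∀ j ∈ range (N - 1), e 0 j = 4 * δ ^ 2 := fun j hj ↦ by
    have := mem_range.1 hj
    simp only [e, Nat.cast_zero, hedge j (by omega), hedge (j + 1) (by omega),
      hedge (j + 2) (by omega), sqnorm, Prod.smul_mk, Prod.mk_sub_mk, Prod.mk_add_mk, smul_eq_mul]
    ring
  have hN2' : (2 : ℝ) ≤ N := by exact_mod_cast hN2
  have hthird : 1 / 3 ≤ ε * (N - 1) := by nlinarith
  calc 2 / 3 * ε * δ ^ 2 = 2 * ε * δ ^ 2 * (1 / 3) := by ring
    _ ≤ 2 * ε * δ ^ 2 * (ε * (N - 1)) := by gcongr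
    _ = ε ^ 2 / 2 * ∑ j ∈ range (N - 1), e 0 j := by
        rw [sum_congr rfl hdensity, sum_const, card_range, nsmul_eq_mul, Nat.cast_pred (by omega)]
        ring
    _ ≤ ε ^ 2 / 2 * ∑ i ∈ range (N + 1), ∑ j ∈ range (N - 1), e i j := by
        gcongr
        exact single_le_sum (f := fun i ↦ ∑ j ∈ range (N - 1), e i j)
          (fun _ _ ↦ sum_nonneg fun _ _ ↦ sqnorm_nonneg _) (mem_range.2 N.succ_pos)
    _ = Ever ε δ u := (Ever_eq_sum_range hN δ u).symm
    _ ≤ E ε δ u := le_add_of_nonneg_left (Ehor_nonneg _ _ _)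

lemma mul_log_div_le_E (hε : 0 < ε) (hδ : 0 ≤ δ) (hδ' : δ < 1 / 100) (hN : Kof ε = N)
    (hu : InS0 ε u) (hE : E ε δ u < ε ^ 2 / 20000) {D M : ℕ} (hD : 1 ≤ D) (hDM : D ≤ M)
    (hMN : 128 * M ≤ N) (hDδ : (D : ℝ) ^ 2 * δ ≤ 1) :
    ε ^ 2 * (N * D * δ ^ 2) * log (M / D) / 2 ^ 12 ≤ E ε δ u := by
  obtain ⟨φ, hlift, hφ⟩ := exists_isLift_isAnchoredAngle hε hδ' hN (by omega) hu hE
  have hlog := (hφ.mono (by linarith [pi_gt_three])).mul_log_div_le hδ hD hDM hMN hDδ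
  calc ε ^ 2 * (N * D * δ ^ 2) * log (M / D) / 2 ^ 12
      = ε ^ 2 / 2 * (N * D * δ ^ 2 / 2048 * log (M / D)) := by ring
    _ ≤ ε ^ 2 / 2 * (verticalEnergy δ N φ + verticalEnergy δ N (flip φ)) := by gcongr
    _ ≤ E ε δ u := hφ.mul_verticalEnergy_add_le_E hlift hN δ

lemma half_le_log {y : ℝ} (hy : 2 ≤ y) : 1 / 2 ≤ log y :=
  (by linarith [log_two_gt_d9] : 1 / 2 ≤ log 2).trans (log_le_log two_pos hy)

lemma abs_log_add_one_le {x y : ℝ} (hx : 0 < x) (hx1 : x ≤ 1) (hy : 2 ≤ y)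
    (hxy : 1 ≤ 512 * (x * y)) : |log x| + 1 ≤ 12 * log y := by
  have hlog2 : log 2 ≤ log y := log_le_log two_pos hy
  have hprod : 0 ≤ 9 * log 2 + (log x + log y) := by
    rw [← log_mul hx.ne' (by positivity), ← Nat.cast_ofNat, ← log_pow, ← log_mul (by norm_num)
      (by positivity)]
    exact log_nonneg (by norm_num; linarith)
  rw [abs_of_nonpos (log_nonpos hx.le hx1)]
  linarith [half_le_log hy]

lemma floor_one_div_mul_le {s : ℝ} (hs : 0 < s) : ⌊1 / s⌋₊ * s ≤ 1 :=
  (le_div_iff₀ hs).1 (Nat.floor_le (by positivity))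

lemma half_le_floor_one_div_mul {s : ℝ} (hs : 0 < s) (hs2 : s ≤ 1 / 2) : 1 / 2 ≤ ⌊1 / s⌋₊ * s := by
  have := (div_lt_iff₀ hs).1 (Nat.lt_floor_add_one (1 / s))
  linarith

lemma sq_mul_le_one_of_le_floor (hδ : 0 < δ) {D : ℕ} (hD : D ≤ ⌊1 / √δ⌋₊) :
    (D : ℝ) ^ 2 * δ ≤ 1 :=
  calc (D : ℝ) ^ 2 * δ = (D * √δ) ^ 2 := by rw [mul_pow, sq_sqrt hδ.le]
    _ ≤ (⌊1 / √δ⌋₊ * √δ) ^ 2 := by gcongr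
    _ ≤ 1 := pow_le_one₀ (by positivity) (floor_one_div_mul_le (sqrt_pos.2 hδ))

-- The lattice is too small for windows of height `1 / √δ`, so take `D` comparable to `N`.
lemma sq_le_mul_E_of_le_floor (hε : 0 < ε) (hδ : 0 < δ) (hδ' : δ < 1 / 100) (hN : Kof ε = N)
    (hu : InS0 ε u) (hE : E ε δ u < ε ^ 2 / 20000) (hN256 : 256 ≤ N) (hεN : 1 / 2 ≤ ε * N)
    (hfloor : N / 256 ≤ ⌊1 / √δ⌋₊) :
    δ ^ 2 ≤ 2 ^ 24 * E ε δ u := by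
  set D := N / 256
  set M := N / 128
  have hD : 1 ≤ D := by omega
  have hND : (N : ℝ) ≤ 512 * D := by exact_mod_cast (by omega : N ≤ 512 * D)
  have hDM : 2 * (D : ℝ) ≤ M := by exact_mod_cast (by omega : 2 * D ≤ M)
  have hlog : 1 / 2 ≤ log (M / D) := half_le_log ((le_div_iff₀ (Nat.cast_pos.2 hD)).2 hDM)
  have hlower := mul_log_div_le_E hε hδ.le hδ' hN hu hE hD (by omega : D ≤ M) (by omega)
    (sq_mul_le_one_of_le_floor hδ hfloor)
  calc δ ^ 2 = 4 * (1 / 2) ^ 2 * δ ^ 2 := by ring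
    _ ≤ 4 * (ε * N) ^ 2 * δ ^ 2 := by gcongr
    _ = 4 * (ε ^ 2 * (N * N * δ ^ 2)) := by ring
    _ ≤ 4 * (ε ^ 2 * (N * (512 * D) * δ ^ 2)) := by gcongr
    _ = 2 ^ 12 * (ε ^ 2 * (N * D * δ ^ 2)) * (1 / 2) := by ring
    _ ≤ 2 ^ 12 * (ε ^ 2 * (N * D * δ ^ 2)) * log (M / D) := by gcongr
    _ = 2 ^ 24 * (ε ^ 2 * (N * D * δ ^ 2) * log (M / D) / 2 ^ 12) := by ring
    _ ≤ 2 ^ 24 * E ε δ u := by gcongr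

-- The lattice contains windows of height `1 / √δ`, which is then the best choice of `D`.
lemma mul_log_le_mul_E_of_floor_le (hε : 0 < ε) (hδ : 0 < δ) (hδ' : δ < 1 / 100)
    (hN : Kof ε = N) (hu : InS0 ε u) (hE : E ε δ u < ε ^ 2 / 20000) (hεN : 1 / 2 ≤ ε * N)
    (hεN1 : ε * N < 1) (hfloor : ⌊1 / √δ⌋₊ ≤ N / 256) :
    ε * (δ * √δ) * (|log (ε / √δ)| + 1) ≤ 2 ^ 18 * E ε δ u := by
  set D := ⌊1 / √δ⌋₊
  set M := N / 128
  have hs : 0 < √δ := sqrt_pos.2 hδ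
  have hDs : D * √δ ≤ 1 := floor_one_div_mul_le hs
  have hDs' : 1 / 2 ≤ D * √δ :=
    half_le_floor_one_div_mul hs (sqrt_le_iff.2 ⟨by norm_num, by linarith⟩)
  have hD : 1 ≤ D := Nat.one_le_iff_ne_zero.2 fun h ↦ by norm_num [h] at hDs'
  have hD0 : (0 : ℝ) < D := Nat.cast_pos.2 hD
  have hND : 256 * (D : ℝ) ≤ N := by exact_mod_cast (by omega : 256 * D ≤ N)
  have hNM : (N : ℝ) ≤ 256 * M := by exact_mod_cast (by omega : N ≤ 256 * M)
  have hMD : 2 ≤ (M : ℝ) / D := by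
    rw [le_div_iff₀ hD0]
    exact_mod_cast (by omega : 2 * D ≤ M)
  have hεs : ε ≤ √δ := by nlinarith
  have hratio : 1 ≤ 512 * (ε / √δ * (M / D)) := by
    rw [div_mul_div_comm, ← mul_div_assoc, le_div_iff₀ (by positivity)]
    nlinarith
  have hlog := abs_log_add_one_le (by positivity) ((div_le_one hs).2 hεs) hMD hratio
  have hlog0 : 0 ≤ log (M / D) := by linarith [half_le_log hMD]
  calc ε * (δ * √δ) * (|log (ε / √δ)| + 1)
      ≤ ε * (δ * √δ) * (12 * log (M / D)) := by gcongr
    _ = 48 * (1 / 2 * (1 / 2)) * (ε * (δ * √δ) * log (M / D)) := by ring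
    _ ≤ 48 * (ε * N * (D * √δ)) * (ε * (δ * √δ) * log (M / D)) := by gcongr
    _ = 48 * (ε ^ 2 * (N * D * δ * √δ ^ 2) * log (M / D)) := by ring
    _ = 48 * 2 ^ 12 * (ε ^ 2 * (N * D * δ ^ 2) * log (M / D) / 2 ^ 12) := by
        rw [sq_sqrt hδ.le]; ring
    _ ≤ 48 * 2 ^ 12 * E ε δ u := by
        gcongr
        exact mul_log_div_le_E hε hδ.le hδ' hN hu hE hD (by omega) (by omega)
          (sq_mul_le_one_of_le_floor hδ le_rfl)
    _ ≤ 2 ^ 18 * E ε δ u := by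
        gcongr; exacts [E_nonneg _ _ _, by norm_num]

lemma mul_sqrt_le_mul_E (hε : 0 < ε) (hε2 : ε < 1 / 2) (hδ : 1 / 100 ≤ δ) (hu : InS0 ε u) :
    ε * √δ ≤ 2 ^ 24 * E ε δ u := by
  have hs : 1 / 10 ≤ √δ := le_sqrt_of_sq_le (by linarith)
  calc ε * √δ = 1000 * (ε * (√δ * (1 / 10) ^ 3)) := by ring
    _ ≤ 1000 * (ε * (√δ * √δ ^ 3)) := by gcongr
    _ = 1500 * (2 / 3 * ε * (√δ ^ 2) ^ 2) := by ring
    _ = 1500 * (2 / 3 * ε * δ ^ 2) := by rw [sq_sqrt (by linarith)]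
    _ ≤ 1500 * E ε δ u := by gcongr; exact mul_sq_le_E hε hε2 hu
    _ ≤ 2 ^ 24 * E ε δ u := by gcongr; exacts [E_nonneg _ _ _, by norm_num]

lemma min_le_mul_E (hδ : 0 < δ) (hδ' : δ < 1 / 100) (hδε : δ ≤ ε) (hε2 : ε < 1 / 2)
    (hu : InS0 ε u) :
    min (δ ^ 2) (ε * (δ * √δ) * (|log (ε / √δ)| + 1)) ≤ 2 ^ 24 * E ε δ u := by
  have hε : 0 < ε := hδ.trans_le hδε
  have hE0 := E_nonneg ε δ u
  obtain ⟨N, hN, -, hεN1, hεN⟩ := exists_Kof_eq_natCast hε hε2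
  rcases le_or_gt (δ ^ 2 / 20000) (E ε δ u) with hlarge | hsmall
  · exact (min_le_left _ _).trans (by linarith)
  have hE : E ε δ u < ε ^ 2 / 20000 := hsmall.trans_le (by gcongr)
  rcases lt_or_ge N 256 with hcoarse | hfine
  · have hN' : (N : ℝ) + 1 ≤ 256 := by exact_mod_cast hcoarse
    have hε' : 1 / 256 ≤ ε := by nlinarith
    have hedge : 2 / 3 * (1 / 256) * δ ^ 2 ≤ E ε δ u :=
      le_trans (by gcongr) (mul_sq_le_E hε hε2 hu)
    exact (min_le_left _ _).trans (by linarith)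
  have hεN2 : 1 / 2 ≤ ε * N := by linarith
  rcases le_total (N / 256) ⌊1 / √δ⌋₊ with hshort | hlong
  · exact (min_le_left _ _).trans (sq_le_mul_E_of_le_floor hε hδ hδ' hN hu hE hfine hεN2 hshort)
  · refine (min_le_right _ _).trans ?_
    linarith [mul_log_le_mul_E_of_floor_le hε hδ hδ' hN hu hE hεN2 hεN1 hlong]

end Scaling

end SpinField

/-- Theorem 2.2(ii) / Proposition 5.6: lower bound of the scaling law. -/
theorem lower_bound_scaling :
    ∃ δbar ∈ Set.Ioo (0 : ℝ) 1, ∃ c : ℝ, 0 < c ∧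
      (∀ ε ∈ Set.Ioo (0 : ℝ) (1 / 2), ∀ δ ∈ Set.Ico δbar 1,
        ∀ u : ℤ × ℤ → ℝ × ℝ, InS0 ε u → c * (ε * Real.sqrt δ) ≤ E ε δ u) ∧
      (∀ δ ∈ Set.Ioo (0 : ℝ) δbar, ∀ ε ∈ Set.Ico δ (1 / 2),
        ∀ u : ℤ × ℤ → ℝ × ℝ, InS0 ε u →
          c * min (δ ^ 2) (ε * (δ * Real.sqrt δ) * (|Real.log (ε / Real.sqrt δ)| + 1))
            ≤ E ε δ u) := by
  refine ⟨1 / 100, by norm_num, (2 ^ 24)⁻¹, by norm_num, fun ε hε δ hδ u hu ↦ ?_,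
    fun δ hδ ε hε u hu ↦ ?_⟩ <;> rw [inv_mul_le_iff₀ (by norm_num)]
  · exact SpinField.mul_sqrt_le_mul_E hε.1 hε.2 hδ.1 hu
  · exact SpinField.min_le_mul_E hδ.1 hδ.2 hε.1 hε.2 hu
end
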